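/- Let K be a simplicial complex with finitely many faces in a finite-dimensional real vector space, with underlying space X = |K| (the union of its faces, with the subspace topology), and let L be a subcomplex of K (every face of L is a face of K) with underlying space Y = |L| ⊆ X. Assume: (1) X∖Y is dense in X; (2) for every y ∈ Y and every open neighborhood U ⊆ X of y there is an open neighborhood V ⊆ U of y such that V∖Y is path connected; (3) every y ∈ Y has a path connected open neighborhood V ⊆ X with π₂(V) = 0 (at every basepoint) such that for every v ∈ V∖Y the homomorphism π₁(V∖Y, v) → π₁(V, v) induced by inclusion is injective. Then the inclusion X∖Y ↪ X is 2-connected: it induces a bijection on path components, an isomorphism on fundamental groups at every basepoint of X∖Y, and a surjection on second homotopy groups at every basepoint of X∖Y. -/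

import Mathlib

/-!
Write `A = X ∖ Y`. All three claims say that a path in `X` with endpoints in `A`, or a square in
`X` with boundary in `A`, can be deformed into `A` relative to its endpoints or boundary.

*Paths* (`Tame.push_path`). Subdivide the path so that each piece lies in one of the small
neighbourhoods of hypothesis (2), move the division points into `A` along short paths (density of
`A` and the local cone structure of `X`), join consecutive new division points inside `A`, and fill
the resulting thin loops, which bound because small balls of a finite complex are star-shaped. This
gives an arbitrarily small homotopy.

*Small squares* (`push_of_nhd`). Let `f` map a square into a neighbourhood `V` as in hypothesis (3),
with boundary in `A`. Collapsing two opposite sides turns `f` into a homotopy in `V` between two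
paths in `V ∩ A`; injectivity of `π₁ (V ∩ A) → π₁ V` provides a second filling `f'` of the same
boundary inside `V ∩ A`, and `π₂ V = 0` makes `f` and `f'` homotopic relative to the boundary
(`HR.of_sphere`). A collar argument (`Push.of_weak`) shows that it does not matter if the boundary
moves inside `A` during a homotopy.

*From small to large squares* (`Tame.push`). No two-dimensional subdivision is used. The point is a
one-dimensional gluing principle, `good_of_local`, valid in any space `Z` with a subset `B` into
which every point can be moved along arbitrarily small paths: a path in `Z` with endpoints in `B`
deforms into `B` relative to its endpoints as soon as this holds locally for short paths. It is
applied to `Z` = the space of paths in `X` with endpoints in `A` and `B` = the paths inside `A`;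
there `Tame.push_path` says that points of `Z` can be moved into `B`, and a square in `X` with
boundary in `A` is a path in `Z`. A square that varies little in one direction is a path of short
paths after transposition, so the principle reduces it to small squares (`Tame.push_strip`); a path
in `Z` near a point is such a square, so the principle applies once more.
-/

/-- The map induced by a continuous map on homotopy groups (for any cube-indexing type `N`). -/
noncomputable def HomotopyGroup.map {X Y : Type*} [TopologicalSpace X] [TopologicalSpace Y]
    (N : Type*) (f : C(X, Y)) (x : X) :
    HomotopyGroup N X x → HomotopyGroup N Y (f x) :=
  Quotient.map
    (fun g => (⟨f.comp g.1, fun y hy => by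
        simp only [ContinuousMap.comp_apply]
        rw [g.2 y hy]⟩ : GenLoop N Y (f x)))
    (fun _ _ hgh => hgh.map fun H => H.compContinuousMap f)

/-- The map induced by a continuous map on path components. -/
noncomputable def ZerothHomotopy.map {X Y : Type*} [TopologicalSpace X] [TopologicalSpace Y]
    (f : C(X, Y)) : ZerothHomotopy X → ZerothHomotopy Y :=
  Quotient.map f (fun _ _ h => h.elim fun p => ⟨p.map f.continuous⟩)

namespace TwoConn

open Set unitInterval Topology

/-! ### Gluing local compressions of paths -/

section Gluing

variable {Z : Type*} [TopologicalSpace Z]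

/-- `Good B F` says that the path `F` is homotopic, relative to its endpoints, to a path that
runs inside `B`. -/
def Good (B : Set Z) {z w : Z} (F : Path z w) : Prop :=
  ∃ G : Path z w, (∀ t, G t ∈ B) ∧ F.Homotopic G

lemma Good.congr {B : Set Z} {z w : Z} {F F' : Path z w} (h : F.Homotopic F')
    (hF : Good B F) : Good B F' := by
  obtain ⟨G, hG, hFG⟩ := hF
  exact ⟨G, hG, h.symm.trans hFG⟩

lemma trans_mem {S : Set Z} {a b c : Z} {p : Path a b} {q : Path b c}
    (hp : ∀ t, p t ∈ S) (hq : ∀ t, q t ∈ S) (t : I) : p.trans q t ∈ S := by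
  have : p.trans q t ∈ range (p.trans q) := mem_range_self t
  rw [Path.trans_range] at this
  rcases this with ⟨s, hs⟩ | ⟨s, hs⟩
  · exact hs ▸ hp s
  · exact hs ▸ hq s

lemma Good.trans {B : Set Z} {a b c : Z} {p : Path a b} {q : Path b c}
    (hp : Good B p) (hq : Good B q) : Good B (p.trans q) := by
  obtain ⟨P, hP, hpP⟩ := hp
  obtain ⟨Q, hQ, hqQ⟩ := hq
  exact ⟨P.trans Q, trans_mem hP hQ, hpP.hcomp hqQ⟩

lemma Good.of_cast {B : Set Z} {a b a' b' : Z} {p : Path a b} (ha : a' = a) (hb : b' = b)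
    (h : Good B (p.cast ha hb)) : Good B p := by
  subst ha hb
  exact h

lemma subpath_mem {S : Set Z} {z w : Z} (F : Path z w) {s t : I} (hst : s ≤ t)
    (h : ∀ u ∈ Icc s t, F u ∈ S) (u : I) : F.subpath s t u ∈ S := by
  have : F.subpath s t u ∈ range (F.subpath s t) := mem_range_self u
  rw [Path.range_subpath_of_le _ _ _ hst] at this
  obtain ⟨v, hv, hv'⟩ := this
  exact hv' ▸ h v hv

/-- Inserting a detour `h · h⁻¹` into `F|[0,t] · g` at time `s`. -/
lemma homotopic_detour {z w x y : Z} (F : Path z w) (s t : I) (g : Path (F t) x)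
    (h : Path (F t) y) :
    (((F.subpath 0 s).trans ((F.subpath s t).trans h)).trans (h.symm.trans g)).Homotopic
      ((F.subpath 0 t).trans g) := by
  have key : ((F.subpath 0 s).trans (F.subpath s t)).Homotopic (F.subpath 0 t) :=
    ⟨Path.Homotopy.subpathTransSubpath F 0 s t⟩
  rw [← Path.Homotopic.Quotient.eq] at key ⊢
  simp only [Path.Homotopic.Quotient.mk_trans, Path.Homotopic.Quotient.mk_symm] at key ⊢
  rw [← key]
  simp only [Path.Homotopic.Quotient.trans_assoc]
  rw [← Path.Homotopic.Quotient.trans_assoc (Path.Homotopic.Quotient.mk h)]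
  simp

/-- Local-to-global principle for compressing paths into a subset `B`: it suffices that `B` can be
reached from every point by arbitrarily small paths and that each point of `F` has an open
neighbourhood in which paths between points of `B` can be compressed. -/
theorem good_of_local (B : Set Z)
    (reach : ∀ (z : Z) (N : Set Z), IsOpen N → z ∈ N →
      ∃ w ∈ B, ∃ h : Path z w, ∀ t, h t ∈ N)
    {z w : Z} (hz : z ∈ B) (hw : w ∈ B) (F : Path z w)
    (hF : ∀ t, ∃ O : Set Z, IsOpen O ∧ F t ∈ O ∧
      ∀ (z' w' : Z) (G : Path z' w'), z' ∈ B → w' ∈ B → (∀ t, G t ∈ O) → Good B G) :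
    Good B F := by
  choose O hO hFO hgood using hF
  obtain ⟨t, t0, tmono, ⟨N, hN⟩, hsub⟩ :=
    exists_monotone_Icc_subset_open_cover_unitInterval (c := fun s => F ⁻¹' O s)
      (fun s => (hO s).preimage F.continuous) (fun s _ => mem_iUnion.2 ⟨s, hFO s⟩)
  choose i hi using hsub
  have claim : ∀ n, ∀ (w' : Z) (g : Path (F (t n)) w'), w' ∈ B → (∀ u, g u ∈ O (i n)) →
      Good B ((F.subpath 0 (t n)).trans g) := by
    intro n
    induction n with
    | zero =>
      intro w' g hw' hg
      have e : F (t 0) ∈ B := by rw [t0, F.source]; exact hz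
      refine (hgood (i 0) _ _ _ ?_ hw' ?_)
      · rw [F.source]; exact hz
      · apply trans_mem _ hg
        refine subpath_mem F t0.symm.le fun u hu => ?_
        exact hi 0 ⟨t0 ▸ hu.1, hu.2.trans (tmono (Nat.zero_le _))⟩
    | succ n ih =>
      intro w' g hw' hg
      have hle : t n ≤ t (n + 1) := tmono (Nat.le_succ n)
      obtain ⟨y, hy, h, hh⟩ := reach (F (t (n + 1))) (O (i n) ∩ O (i (n + 1)))
        ((hO _).inter (hO _))
        ⟨hi n ⟨hle, le_rfl⟩, hi (n + 1) ⟨le_rfl, tmono (Nat.le_succ _)⟩⟩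
      refine (homotopic_detour F (t n) (t (n + 1)) g h) |> fun hd => Good.congr hd ?_
      refine Good.trans (ih _ _ hy (trans_mem ?_ fun u => (hh u).1)) ?_
      · exact subpath_mem F hle fun u hu => hi n hu
      · refine hgood (i (n + 1)) _ _ _ hy hw' (trans_mem (fun u => ?_) hg)
        exact (hh _).2
  have fin : ∀ s : I, s = 1 → Good B ((F.subpath 0 s).trans (Path.refl (F s))) → Good B F := by
    rintro s rfl h
    rw [Path.subpath_zero_one] at h
    exact Good.of_cast F.source F.target (h.congr ⟨Path.Homotopy.transRefl _⟩)
  refine fin (t N) (hN N le_rfl) (claim N _ _ ?_ fun u => ?_)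
  · rw [hN N le_rfl, F.target]; exact hw
  · exact hi N ⟨le_rfl, tmono (Nat.le_succ _)⟩

end Gluing

/-! ### Homotopies of maps on the unit square -/

section Square

/-- The centre of the unit square. -/
noncomputable def ctr : ℝ × ℝ := (1 / 2, 1 / 2)

/-- Twice the sup-distance to the centre: the unit square is `rad ≤ 1`, its boundary is
`rad = 1`. -/
noncomputable def rad (x : ℝ × ℝ) : ℝ := 2 * ‖x - ctr‖

/-- Scaling of the plane about the centre of the unit square. -/
noncomputable def sc (a : ℝ) (x : ℝ × ℝ) : ℝ × ℝ := ctr + a • (x - ctr)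

@[fun_prop] lemma continuous_rad : Continuous rad := by unfold rad; fun_prop

@[fun_prop] lemma Continuous.sc {T : Type*} [TopologicalSpace T] {a : T → ℝ} {x : T → ℝ × ℝ}
    (ha : Continuous a) (hx : Continuous x) : Continuous fun t => sc (a t) (x t) := by
  unfold TwoConn.sc; fun_prop

lemma rad_nonneg (x : ℝ × ℝ) : 0 ≤ rad x := by unfold rad; positivity

lemma rad_sc (a : ℝ) (x : ℝ × ℝ) : rad (sc a x) = |a| * rad x := by
  simp only [rad, sc, add_sub_cancel_left, norm_smul, Real.norm_eq_abs]; ring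

lemma rad_sc_nonneg {a : ℝ} (ha : 0 ≤ a) (x : ℝ × ℝ) : rad (sc a x) = a * rad x := by
  rw [rad_sc, abs_of_nonneg ha]

@[simp] lemma sc_one (x : ℝ × ℝ) : sc 1 x = x := by simp [sc]

@[simp] lemma sc_zero (x : ℝ × ℝ) : sc 0 x = ctr := by simp [sc]

lemma sc_sc (a b : ℝ) (x : ℝ × ℝ) : sc a (sc b x) = sc (a * b) x := by
  simp [sc, mul_smul]

lemma rad_eq (x : ℝ × ℝ) : rad x = max |2 * x.1 - 1| |2 * x.2 - 1| := by
  have h : ∀ y : ℝ, |2 * y - 1| = 2 * |y - 1 / 2| := fun y => by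
    rw [← abs_of_pos (two_pos : (0 : ℝ) < 2), ← abs_mul]
    congr 1
    simp; ring
  rw [h, h, ← mul_max_of_nonneg _ _ (two_pos.le : (0 : ℝ) ≤ 2)]
  simp [rad, ctr, Prod.norm_def]

lemma rad_le_one (x : ℝ × ℝ) : rad x ≤ 1 ↔ x.1 ∈ I ∧ x.2 ∈ I := by
  rw [rad_eq, max_le_iff, abs_le, abs_le]
  simp only [mem_Icc]
  constructor <;> rintro ⟨⟨h1, h2⟩, h3, h4⟩ <;> refine ⟨⟨?_, ?_⟩, ?_, ?_⟩ <;> linarith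

lemma rad_eq_one (x : ℝ × ℝ) : rad x = 1 ↔
    (x.1 ∈ I ∧ x.2 ∈ I) ∧ (x.1 = 0 ∨ x.1 = 1 ∨ x.2 = 0 ∨ x.2 = 1) := by
  rw [← rad_le_one, le_antisymm_iff, and_congr_right_iff]
  intro h
  obtain ⟨⟨h1, h2⟩, h3, h4⟩ := (rad_le_one x).1 h
  rw [rad_eq, le_max_iff, le_abs, le_abs]
  constructor
  · rintro ((h | h) | (h | h))
    · right; left; linarith
    · left; linarith
    · right; right; right; linarith
    · right; right; left; linarith
  · rintro (h | h | h | h) <;> rw [h] <;> norm_num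

variable {X : Type*} [TopologicalSpace X]

/-- `Htp C f g`: the restrictions of `f` and `g` to the unit square are homotopic through maps
that send each boundary point `x` into `C x`. Maps on the square are encoded as functions on the
whole plane whose values off the square do not matter. -/
def Htp (C : ℝ × ℝ → Set X) (f g : ℝ × ℝ → X) : Prop :=
  ∃ H : ℝ × (ℝ × ℝ) → X, Continuous H ∧ (∀ x, rad x ≤ 1 → H (0, x) = f x) ∧
    (∀ x, rad x ≤ 1 → H (1, x) = g x) ∧
    ∀ u, 0 ≤ u → u ≤ 1 → ∀ x, rad x = 1 → H (u, x) ∈ C x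

/-- Homotopy of maps on the unit square relative to its boundary. -/
def HR (f g : ℝ × ℝ → X) : Prop := Htp (fun x => {f x}) f g

/-- `f` is homotopic, relative to the boundary of the unit square, to a map of the square
into `A`. -/
def Push (A : Set X) (f : ℝ × ℝ → X) : Prop :=
  ∃ g : ℝ × ℝ → X, Continuous g ∧ (∀ x, rad x ≤ 1 → g x ∈ A) ∧ HR f g

lemma Htp.symm {C : ℝ × ℝ → Set X} {f g : ℝ × ℝ → X} (h : Htp C f g) : Htp C g f := by
  obtain ⟨H, hc, h0, h1, hb⟩ := h
  refine ⟨fun p => H (1 - p.1, p.2), by fun_prop, fun x hx => by simpa using h1 x hx,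
    fun x hx => by simpa using h0 x hx, fun u hu0 hu1 x hx => ?_⟩
  exact hb _ (by linarith) (by linarith) x hx

lemma Htp.mono {C D : ℝ × ℝ → Set X} {f g : ℝ × ℝ → X} (h : Htp C f g)
    (hCD : ∀ x, rad x = 1 → C x ⊆ D x) : Htp D f g := by
  obtain ⟨H, hc, h0, h1, hb⟩ := h
  exact ⟨H, hc, h0, h1, fun u hu0 hu1 x hx => hCD x hx (hb u hu0 hu1 x hx)⟩

lemma Htp.congr {C : ℝ × ℝ → Set X} {f g f' g' : ℝ × ℝ → X} (h : Htp C f g)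
    (hf : ∀ x, rad x ≤ 1 → f x = f' x) (hg : ∀ x, rad x ≤ 1 → g x = g' x) : Htp C f' g' := by
  obtain ⟨H, hc, h0, h1, hb⟩ := h
  exact ⟨H, hc, fun x hx => (h0 x hx).trans (hf x hx), fun x hx => (h1 x hx).trans (hg x hx), hb⟩

lemma rad_clamp_le (x : ℝ × ℝ) : rad (sc (1 / max (rad x) 1) x) ≤ 1 := by
  have h : 0 < max (rad x) 1 := lt_max_of_lt_right one_pos
  rw [rad_sc_nonneg (by positivity), div_mul_eq_mul_div, one_mul, div_le_one h]
  exact le_max_left _ _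

lemma clamp_eq {x : ℝ × ℝ} (hx : rad x ≤ 1) : sc (1 / max (rad x) 1) x = x := by
  rw [max_eq_right hx]; simp

lemma Htp.trans {C : ℝ × ℝ → Set X} {f g k : ℝ × ℝ → X} (h : Htp C f g) (hgk : Htp C g k) :
    Htp C f k := by
  obtain ⟨H, hc, h0, h1, hb⟩ := h
  obtain ⟨H', hc', h0', h1', hb'⟩ := hgk
  -- the halves are matched on the whole plane by first retracting it onto the square
  refine ⟨fun p => if p.1 ≤ 1 / 2 then H (2 * p.1, sc (1 / max (rad p.2) 1) p.2)
    else H' (2 * p.1 - 1, sc (1 / max (rad p.2) 1) p.2), ?_, ?_, ?_, ?_⟩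
  · have h : ∀ p : ℝ × (ℝ × ℝ), max (rad p.2) 1 ≠ 0 := fun p =>
      (lt_max_of_lt_right one_pos).ne'
    refine Continuous.if_le (by fun_prop (disch := exact h)) (by fun_prop (disch := exact h))
      (by fun_prop) (by fun_prop) ?_
    intro p hp
    rw [hp]
    have := rad_clamp_le p.2
    rw [show (2 : ℝ) * (1 / 2) = 1 by norm_num, h1 _ this, sub_self, h0' _ this]
  · intro x hx
    have : (0 : ℝ) ≤ 1 / 2 := by norm_num
    simp only [this, if_true, clamp_eq hx, mul_zero, h0 x hx]
  · intro x hx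
    have : ¬ (1 : ℝ) ≤ 1 / 2 := by norm_num
    simp only [this, if_false, clamp_eq hx]
    rw [show (2 : ℝ) * 1 - 1 = 1 by norm_num, h1' x hx]
  · intro u hu0 hu1 x hx
    simp only [clamp_eq hx.le]
    split_ifs with hu
    · exact hb _ (by linarith) (by linarith) x hx
    · exact hb' _ (by linarith) (by linarith) x hx

lemma HR.eqS {f g : ℝ × ℝ → X} (h : HR f g) {x : ℝ × ℝ} (hx : rad x = 1) : g x = f x := by
  obtain ⟨H, hc, h0, h1, hb⟩ := h
  rw [← h1 x hx.le]
  exact hb 1 zero_le_one le_rfl x hx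

lemma HR.symm {f g : ℝ × ℝ → X} (h : HR f g) : HR g f :=
  (Htp.symm h).mono fun x hx => by rw [h.eqS hx]

lemma HR.trans {f g k : ℝ × ℝ → X} (h : HR f g) (h' : HR g k) : HR f k :=
  Htp.trans h (Htp.mono h' fun x hx => by rw [h.eqS hx])

lemma HR.congr {f g f' g' : ℝ × ℝ → X} (h : HR f g)
    (hf : ∀ x, rad x ≤ 1 → f x = f' x) (hg : ∀ x, rad x ≤ 1 → g x = g' x) : HR f' g' :=
  (Htp.congr h hf hg).mono fun x hx => by rw [hf x hx.le]

lemma HR.of_eq {f g : ℝ × ℝ → X} (hf : Continuous f) (h : ∀ x, rad x ≤ 1 → f x = g x) :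
    HR f g :=
  ⟨fun p => f p.2, by fun_prop, fun _ _ => rfl, h, fun _ _ _ _ _ => rfl⟩

lemma Push.of_HR {A : Set X} {f g : ℝ × ℝ → X} (h : HR f g) (hg : Push A g) : Push A f := by
  obtain ⟨k, hk, hkA, hgk⟩ := hg
  exact ⟨k, hk, hkA, h.trans hgk⟩

lemma Push.congr {A : Set X} {f g : ℝ × ℝ → X} (h : ∀ x, rad x ≤ 1 → f x = g x)
    (hf : Push A f) : Push A g := by
  obtain ⟨k, hk, hkA, hfk⟩ := hf
  exact ⟨k, hk, hkA, hfk.congr h fun _ _ => rfl⟩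

/-- Compression: a homotopy that keeps the boundary in `A` and ends in `A` can be replaced by
one that fixes the boundary, by letting a collar of the square absorb the track of the
boundary. -/
lemma Push.of_weak {A : Set X} {f g : ℝ × ℝ → X} (h : Htp (fun _ => A) f g)
    (hg : ∀ x, rad x ≤ 1 → g x ∈ A) : Push A f := by
  obtain ⟨K, hc, h0, h1, hb⟩ := h
  have hr : ∀ x : ℝ × ℝ, 0 < max (rad x) (1 / 2) := fun x => lt_max_of_lt_right (by norm_num)
  let H : ℝ × (ℝ × ℝ) → X := fun p =>
    K (p.1 * min 1 (2 * (1 - rad p.2)), sc ((1 - p.1) + p.1 / max (rad p.2) (1 / 2)) p.2)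
  have hH : Continuous H := by
    have : ∀ p : ℝ × (ℝ × ℝ), max (rad p.2) (1 / 2) ≠ 0 := fun p => (hr p.2).ne'
    fun_prop (disch := exact this)
  have hS : ∀ u x, rad x = 1 → H (u, x) = f x := by
    intro u x hx
    have : (1 : ℝ) ⊔ 1 / 2 = 1 := by norm_num
    simp only [H, hx, this]
    norm_num
    exact h0 x hx.le
  refine ⟨fun x => H (1, x), by fun_prop, ?_, H, hH, ?_, fun _ _ => rfl, ?_⟩
  · intro x hx
    simp only [H, sub_self, zero_add, one_mul]
    have hr' := hr x
    have hsc : rad (sc (1 / max (rad x) (1 / 2)) x) = 1 / max (rad x) (1 / 2) * rad x :=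
      rad_sc_nonneg (by positivity) x
    rcases le_total (rad x) (1 / 2) with h | h
    · rw [min_eq_left (by linarith)]
      rw [h1]
      · refine hg _ ?_
        rw [hsc, max_eq_right h]; linarith
      · rw [hsc, max_eq_right h]; linarith
    · rw [max_eq_left h] at *
      refine hb _ (le_min zero_le_one (by linarith)) (min_le_left _ _) _ ?_
      rw [hsc]; field_simp
  · intro x hx
    simp only [H]
    simpa using h0 x hx
  · intro u _ _ x hx
    exact hS u x hx

/-- If all maps of the square into `V` that are constant on the boundary are homotopic relative
to the boundary, then so are any two maps of the square into `V` that agree on the boundary: glue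
`f` on a small square with `f'` on the surrounding annulus, swap the inner part, and cancel. -/
lemma HR.of_sphere {V : Set X}
    (hV : ∀ g g' : ℝ × ℝ → X, ∀ v ∈ V, Continuous g → Continuous g' →
      (∀ x, rad x ≤ 1 → g x ∈ V) → (∀ x, rad x ≤ 1 → g' x ∈ V) →
      (∀ x, rad x = 1 → g x = v) → (∀ x, rad x = 1 → g' x = v) → HR g g')
    {f f' : ℝ × ℝ → X} (hf : Continuous f) (hf' : Continuous f')
    (hfV : ∀ x, rad x ≤ 1 → f x ∈ V) (hfV' : ∀ x, rad x ≤ 1 → f' x ∈ V)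
    (hff' : ∀ x, rad x = 1 → f x = f' x) : HR f f' := by
  have r2 : ∀ x : ℝ × ℝ, 0 < max (rad x) (1 / 2) := fun x => lt_max_of_lt_right (by norm_num)
  have r4 : ∀ x : ℝ × ℝ, 0 < max (rad x) (1 / 4) := fun x => lt_max_of_lt_right (by norm_num)
  have r2' : ∀ x : ℝ × ℝ, max (rad x) (1 / 2) ≠ 0 := fun x => (r2 x).ne'
  have r4' : ∀ x : ℝ × ℝ, max (rad x) (1 / 4) ≠ 0 := fun x => ne_of_gt (r4 x)
  -- the double of `f` and `f'`, constant on the boundary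
  let D : (ℝ × ℝ → X) → ℝ × ℝ → X := fun k x =>
    if rad x ≤ 1 / 2 then k (sc 2 x) else f' (sc ((2 - 2 * rad x) / max (rad x) (1 / 2)) x)
  have hDc : ∀ k : ℝ × ℝ → X, Continuous k → (∀ x, rad x = 1 → k x = f' x) →
      Continuous (D k) := by
    intro k hk hkf
    refine Continuous.if_le (by fun_prop) (by fun_prop (disch := exact r2')) (by fun_prop)
      (by fun_prop) ?_
    intro x hx
    rw [hkf _ (by rw [rad_sc_nonneg two_pos.le, hx]; norm_num), hx]
    norm_num
  have hDV : ∀ k : ℝ × ℝ → X, (∀ x, rad x ≤ 1 → k x ∈ V) → ∀ x, rad x ≤ 1 → D k x ∈ V := by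
    intro k hk x hx
    simp only [D]
    split_ifs with h
    · exact hk _ (by rw [rad_sc_nonneg two_pos.le]; linarith)
    · push Not at h
      refine hfV' _ ?_
      rw [max_eq_left h.le, rad_sc_nonneg (div_nonneg (by linarith) (by linarith)),
        div_mul_cancel₀ _ (by linarith)]
      linarith
  have hDS : ∀ k : ℝ × ℝ → X, ∀ x, rad x = 1 → D k x = f' ctr := by
    intro k x hx
    have : ¬ (1 : ℝ) ≤ 1 / 2 := by norm_num
    simp only [D, hx, this, if_false]
    norm_num
  have hctr : rad ctr ≤ 1 := by simp [rad]
  obtain ⟨K, hKc, hK0, hK1, hKS⟩ := hV (D f) (D f') (f' ctr) (hfV' _ hctr) (hDc f hf hff')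
    (hDc f' hf' fun _ _ => rfl) (hDV f hfV) (hDV f' hfV') (hDS f) (hDS f')
  -- `M k 1` is `k` extended by the boundary values; `M k 0` traverses the collar inwards and out
  let M : (ℝ × ℝ → X) → ℝ × (ℝ × ℝ) → X := fun k p =>
    if rad p.2 ≤ 1 / 4 then k (sc 4 p.2) else
      f' (sc (max (min p.1 1) (max (2 - 4 * rad p.2) (2 * rad p.2 - 1)) / max (rad p.2) (1 / 4))
        p.2)
  have hMc : ∀ k : ℝ × ℝ → X, Continuous k → (∀ x, rad x = 1 → k x = f' x) →
      Continuous (M k) := by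
    intro k hk hkf
    have r4'' : ∀ p : ℝ × (ℝ × ℝ), max (rad p.2) (1 / 4) ≠ 0 := fun x => (r4 x.2).ne'
    refine Continuous.if_le (by fun_prop) (by fun_prop (disch := exact r4'')) (by fun_prop)
      (by fun_prop) ?_
    intro p hx
    rw [hkf _ (by rw [rad_sc_nonneg (by norm_num), hx]; norm_num), hx, max_self]
    rw [max_eq_left (a := (2 : ℝ) - 4 * (1 / 4)) (by norm_num),
      max_eq_right ((min_le_right _ _).trans (by norm_num))]
    norm_num
  have hM : ∀ k : ℝ × ℝ → X, Continuous k → (∀ x, rad x = 1 → k x = f' x) →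
      HR k (fun x => M k (0, x)) := by
    intro k hk hkf
    have hJ : HR k (fun x => M k (1, x)) := by
      have r4'' : ∀ p : ℝ × (ℝ × ℝ), max (rad p.2) (1 / 4) ≠ 0 := fun x => (r4 x.2).ne'
      refine ⟨fun p => k (sc ((1 - p.1) + p.1 / max (rad p.2) (1 / 4)) p.2),
        by fun_prop (disch := exact r4''), fun x _ => by simp, fun x hx => ?_, ?_⟩
      · simp only [M, sub_self, zero_add, min_self]
        split_ifs with h
        · rw [max_eq_right h]; norm_num
        · push Not at h
          rw [max_eq_left h.le, max_eq_left (a := (1 : ℝ))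
            (max_le (by linarith) (by linarith)), hkf]
          rw [rad_sc_nonneg (by positivity)]
          field_simp
      · intro u _ _ x hx
        have : (1 : ℝ) ⊔ 1 / 4 = 1 := by norm_num
        simp [hx, this, -one_div]
    have hM' : HR (fun x => M k (1, x)) (fun x => M k (0, x)) := by
      refine HR.symm ⟨M k, hMc k hk hkf, fun _ _ => rfl, fun _ _ => rfl, ?_⟩
      intro u _ hu1 x hx
      have h1 : ¬ (1 : ℝ) ≤ 1 / 4 := by norm_num
      have h2 : (max (2 - 4 * 1) (2 * 1 - 1) : ℝ) = 1 := by norm_num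
      simp only [M, hx, h1, if_false, h2, mem_singleton_iff]
      rw [max_eq_right (min_le_right _ _), max_eq_right (min_le_right _ _)]
    exact (hJ.trans hM')
  -- swapping the inner part
  have hE : HR (fun x => M f (0, x)) (fun x => M f' (0, x)) := by
    have key : ∀ k : ℝ × ℝ → X, ∀ x, rad x ≤ 1 →
        (if rad x ≤ 1 / 2 then D k (sc 2 x) else
          f' (sc ((2 * rad x - 1) / max (rad x) (1 / 2)) x)) = M k (0, x) := by
      intro k x hx
      simp only [M, D, rad_sc_nonneg (zero_le_two : (0 : ℝ) ≤ 2), sc_sc]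
      rw [min_eq_left (zero_le_one : (0 : ℝ) ≤ 1)]
      have h0 := rad_nonneg x
      by_cases h4 : rad x ≤ 1 / 4
      · rw [if_pos (by linarith), if_pos (by linarith), if_pos h4]; norm_num
      push Not at h4
      rw [if_neg h4.not_ge]
      by_cases h2 : rad x ≤ 1 / 2
      · rw [if_pos h2, if_neg (by linarith), max_eq_left (a := 2 * rad x) (by linarith),
          max_eq_left (a := rad x) h4.le, max_eq_left (a := 2 - 4 * rad x) (by linarith),
          max_eq_right (a := (0 : ℝ)) (by linarith)]
        congr 2
        field_simp
        ring
      · push Not at h2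
        rw [if_neg h2.not_ge, max_eq_left h2.le, max_eq_left h4.le,
          max_eq_right (a := 2 - 4 * rad x) (by linarith),
          max_eq_right (a := (0 : ℝ)) (by linarith)]
    have hcl : ∀ u : ℝ, 0 ≤ max 0 (min u 1) ∧ max 0 (min u 1) ≤ 1 := fun u =>
      ⟨le_max_left _ _, max_le zero_le_one (min_le_right _ _)⟩
    refine HR.congr (f := fun x => if rad x ≤ 1 / 2 then D f (sc 2 x) else
          f' (sc ((2 * rad x - 1) / max (rad x) (1 / 2)) x)) (g := fun x =>
          if rad x ≤ 1 / 2 then D f' (sc 2 x) else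
          f' (sc ((2 * rad x - 1) / max (rad x) (1 / 2)) x)) ?_ (key f) (key f')
    refine ⟨fun p => if rad p.2 ≤ 1 / 2 then K (max 0 (min p.1 1), sc 2 p.2) else
      f' (sc ((2 * rad p.2 - 1) / max (rad p.2) (1 / 2)) p.2), ?_, ?_, ?_, ?_⟩
    · have r2'' : ∀ p : ℝ × (ℝ × ℝ), max (rad p.2) (1 / 2) ≠ 0 := fun x => (r2 x.2).ne'
      refine Continuous.if_le (by fun_prop) (by fun_prop (disch := exact r2'')) (by fun_prop)
        (by fun_prop) ?_
      intro p hp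
      have h1 : rad (sc 2 p.2) = 1 := by rw [rad_sc_nonneg two_pos.le, hp]; norm_num
      have h2 := hKS _ (hcl p.1).1 (hcl p.1).2 _ h1
      rw [h2, hDS _ _ h1, hp]
      norm_num
    · intro x hx
      by_cases h : rad x ≤ 1 / 2
      · simp only [h, if_true]
        rw [← hK0 _ (by rw [rad_sc_nonneg two_pos.le]; linarith)]
        norm_num
      · simp only [h, if_false]
    · intro x hx
      by_cases h : rad x ≤ 1 / 2
      · simp only [h, if_true]
        rw [← hK1 _ (by rw [rad_sc_nonneg two_pos.le]; linarith)]
        norm_num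
      · simp only [h, if_false]
    · intro u _ _ x hx
      have : ¬ (1 : ℝ) ≤ 1 / 2 := by norm_num
      simp only [hx, this, if_false, mem_singleton_iff]
  exact (hM f hf hff').trans (hE.trans (hM f' hf' fun _ _ => rfl).symm)

end Square

/-! ### Pushing a square that lies in a good neighbourhood -/

section Pi

variable {X : Type*} [TopologicalSpace X] {Y : Type*} [TopologicalSpace Y]

lemma genLoop_homotopic_iff {x : X} (γ δ : GenLoop (Fin 1) X x) :
    GenLoop.Homotopic γ δ ↔
      (genLoopEquivOfUnique (Fin 1) γ).Homotopic (genLoopEquivOfUnique (Fin 1) δ) := by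
  constructor
  · intro h
    have := congrArg (homotopyGroupEquivFundamentalGroupOfUnique (Fin 1))
      (Quotient.sound h : (⟦γ⟧ : HomotopyGroup (Fin 1) X x) = ⟦δ⟧)
    exact Quotient.exact this
  · intro h
    refine Quotient.exact
      ((homotopyGroupEquivFundamentalGroupOfUnique (X := X) (x := x) (Fin 1)).injective ?_)
    exact Quotient.sound h

lemma pi1_injective_iff (φ : C(X, Y)) (x : X) :
    Function.Injective (HomotopyGroup.map (Fin 1) φ x) ↔
      ∀ γ δ : Path x x, (γ.map φ.continuous).Homotopic (δ.map φ.continuous) → γ.Homotopic δ := by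
  constructor
  · intro h γ δ hγδ
    have := @h ⟦(genLoopEquivOfUnique (Fin 1)).symm γ⟧ ⟦(genLoopEquivOfUnique (Fin 1)).symm δ⟧
      (Quotient.sound ((genLoop_homotopic_iff _ _).2 hγδ))
    have := (genLoop_homotopic_iff _ _).1 (Quotient.exact this)
    simpa using this
  · intro h a b
    refine Quotient.inductionOn₂ a b fun γ δ hγδ => Quotient.sound ?_
    refine (genLoop_homotopic_iff _ _).2 (h _ _ ?_)
    exact (genLoop_homotopic_iff _ _).1 (Quotient.exact hγδ)

lemma pi1_surjective (φ : C(X, Y)) (x : X)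
    (h : ∀ γ : Path (φ x) (φ x), ∃ δ : Path x x, (δ.map φ.continuous).Homotopic γ) :
    Function.Surjective (HomotopyGroup.map (Fin 1) φ x) := by
  intro b
  refine Quotient.inductionOn b fun γ => ?_
  obtain ⟨δ, hδ⟩ := h (genLoopEquivOfUnique (Fin 1) γ)
  exact ⟨⟦(genLoopEquivOfUnique (Fin 1)).symm δ⟧,
    Quotient.sound ((genLoop_homotopic_iff _ _).2 hδ)⟩

lemma homotopic_of_map (φ : C(X, Y))
    (h : ∀ x, Function.Injective (HomotopyGroup.map (Fin 1) φ x)) {a b : X} {p q : Path a b}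
    (hpq : (p.map φ.continuous).Homotopic (q.map φ.continuous)) : p.Homotopic q := by
  have h1 : (p.trans q.symm).Homotopic (Path.refl a) := by
    refine (pi1_injective_iff φ a).1 (h a) _ _ ?_
    rw [Path.map_trans, ← Path.map_symm]
    refine (hpq.hcomp (Path.Homotopic.refl _)).trans ?_
    exact ⟨(Path.Homotopy.reflTransSymm _).symm⟩
  have e : Path.Homotopic.Quotient.mk p = Path.Homotopic.Quotient.mk q := by
    have h2 : Path.Homotopic.Quotient.mk (p.trans q.symm) = Path.Homotopic.Quotient.mk (Path.refl a) :=
      Quotient.sound h1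
    have h3 := congrArg (fun z => Path.Homotopic.Quotient.trans z (Path.Homotopic.Quotient.mk q)) h2
    simpa [Path.Homotopic.Quotient.mk_trans, Path.Homotopic.Quotient.mk_symm,
      Path.Homotopic.Quotient.trans_assoc] using h3
  exact Quotient.exact e

end Pi

section VLemma

variable {X : Type*} [TopologicalSpace X]

/-- Vanishing of `π₂ V` makes any two squares in `V` with the same constant boundary
homotopic relative to the boundary. -/
lemma sphere_of_pi2 {V : Set X} (hpi2 : ∀ v : V, Subsingleton (HomotopyGroup (Fin 2) V v))
    (g g' : ℝ × ℝ → X) (v : X) (hv : v ∈ V) (hg : Continuous g) (hg' : Continuous g')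
    (hgV : ∀ x, rad x ≤ 1 → g x ∈ V) (hgV' : ∀ x, rad x ≤ 1 → g' x ∈ V)
    (hgS : ∀ x, rad x = 1 → g x = v) (hgS' : ∀ x, rad x = 1 → g' x = v) : HR g g' := by
  have hQ : ∀ y : Fin 2 → I, rad ((y 0 : ℝ), (y 1 : ℝ)) ≤ 1 := fun y =>
    (rad_le_one _).2 ⟨(y 0).2, (y 1).2⟩
  have hS : ∀ y : Fin 2 → I, y ∈ Cube.boundary (Fin 2) → rad ((y 0 : ℝ), (y 1 : ℝ)) = 1 := by
    rintro y ⟨i, hi⟩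
    refine (rad_eq_one _).2 ⟨⟨(y 0).2, (y 1).2⟩, ?_⟩
    fin_cases i <;> rcases hi with hi | hi <;> simp_all
  let L : ∀ k : ℝ × ℝ → X, Continuous k → (∀ x, rad x ≤ 1 → k x ∈ V) →
      (∀ x, rad x = 1 → k x = v) → GenLoop (Fin 2) V ⟨v, hv⟩ := fun k hk hkV hkS =>
    ⟨⟨fun y => ⟨k ((y 0 : ℝ), (y 1 : ℝ)), hkV _ (hQ y)⟩, by fun_prop⟩,
      fun y hy => Subtype.ext (hkS _ (hS y hy))⟩
  have := hpi2 ⟨v, hv⟩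
  have e : (⟦L g hg hgV hgS⟧ : HomotopyGroup (Fin 2) V ⟨v, hv⟩) = ⟦L g' hg' hgV' hgS'⟧ :=
    this.elim _ _
  obtain ⟨H⟩ := Quotient.exact e
  have pe : ∀ x : ℝ × ℝ, rad x ≤ 1 → (((projIcc (0 : ℝ) 1 zero_le_one x.1 : I) : ℝ),
      ((projIcc (0 : ℝ) 1 zero_le_one x.2 : I) : ℝ)) = x := by
    intro x hx
    obtain ⟨h1, h2⟩ := (rad_le_one x).1 hx
    rw [projIcc_of_mem _ h1, projIcc_of_mem _ h2]
  refine ⟨fun p => (H (projIcc 0 1 zero_le_one p.1,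
    ![projIcc 0 1 zero_le_one p.2.1, projIcc 0 1 zero_le_one p.2.2]) : X), ?_, ?_, ?_, ?_⟩
  · refine continuous_subtype_val.comp (H.continuous.comp ?_)
    refine (continuous_projIcc.comp continuous_fst).prodMk (continuous_pi fun i => ?_)
    fin_cases i
    · exact (continuous_projIcc (h := zero_le_one)).comp (continuous_fst.comp continuous_snd)
    · exact (continuous_projIcc (h := zero_le_one)).comp (continuous_snd.comp continuous_snd)
  · intro x hx
    simp only [projIcc_left]
    erw [H.apply_zero]
    exact congrArg g (pe x hx)
  · intro x hx
    simp only [projIcc_right]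
    erw [H.apply_one]
    exact congrArg g' (pe x hx)
  · intro u _ _ x hx
    have hb : ![projIcc 0 1 zero_le_one x.1, projIcc 0 1 zero_le_one x.2] ∈
        Cube.boundary (Fin 2) := by
      obtain ⟨_, h | h | h | h⟩ := (rad_eq_one x).1 hx
      · exact ⟨0, Or.inl (by simp [h])⟩
      · exact ⟨0, Or.inr (by simp [h])⟩
      · exact ⟨1, Or.inl (by simp [h])⟩
      · exact ⟨1, Or.inr (by simp [h])⟩
    refine (congrArg Subtype.val (H.eq_fst _ hb)).trans ?_
    exact congrArg g (pe x hx.le)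

/-- A homotopy of paths in `V` between paths in `V ∩ A` can be replaced by one in `V ∩ A`,
without changing it on the boundary, when `π₁ (V ∩ A) → π₁ V` is injective. -/
lemma refill {A V : Set X} (hpi1 : ∀ v : ↥(V ∩ A), Function.Injective
      (HomotopyGroup.map (Fin 1) (⟨Set.inclusion Set.inter_subset_left,
        continuous_inclusion Set.inter_subset_left⟩ : C(↥(V ∩ A), ↥V)) v))
    (f : ℝ × ℝ → X) (hf : Continuous f) (hfV : ∀ x, rad x ≤ 1 → f x ∈ V)
    (hfA : ∀ x, rad x = 1 → f x ∈ A) (h0 : ∀ s ∈ I, f (s, 0) = f (0, 0))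
    (h1 : ∀ s ∈ I, f (s, 1) = f (0, 1)) :
    ∃ f' : ℝ × ℝ → X, Continuous f' ∧ (∀ x, rad x ≤ 1 → f' x ∈ V ∩ A) ∧
      ∀ x, rad x = 1 → f x = f' x := by
  have hQ : ∀ s t : I, rad ((s : ℝ), (t : ℝ)) ≤ 1 := fun s t => (rad_le_one _).2 ⟨s.2, t.2⟩
  have z : (0 : ℝ) ∈ I := ⟨le_rfl, zero_le_one⟩
  have o : (1 : ℝ) ∈ I := ⟨zero_le_one, le_rfl⟩
  have hp : ∀ t : I, f (0, (t : ℝ)) ∈ V ∩ A := fun t =>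
    ⟨hfV _ (hQ 0 t), hfA _ ((rad_eq_one _).2 ⟨⟨z, t.2⟩, by simp⟩)⟩
  have hq : ∀ t : I, f (1, (t : ℝ)) ∈ V ∩ A := fun t =>
    ⟨hfV _ (hQ 1 t), hfA _ ((rad_eq_one _).2 ⟨⟨o, t.2⟩, by simp⟩)⟩
  let a : ↥(V ∩ A) := ⟨f (0, 0), by simpa using hp 0⟩
  let b : ↥(V ∩ A) := ⟨f (0, 1), by simpa using hp 1⟩
  let p : Path a b :=
    { toFun := fun t => ⟨f (0, (t : ℝ)), hp t⟩
      continuous_toFun := by fun_prop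
      source' := by simp [a]
      target' := by simp [b] }
  let q : Path a b :=
    { toFun := fun t => ⟨f (1, (t : ℝ)), hq t⟩
      continuous_toFun := by fun_prop
      source' := Subtype.ext (by simpa using h0 1 o)
      target' := Subtype.ext (by simpa using h1 1 o) }
  have hpq : p.Homotopic q := by
    refine homotopic_of_map _ hpi1 ⟨?_⟩
    refine
      { toFun := fun x => ⟨f ((x.1 : ℝ), (x.2 : ℝ)), hfV _ (hQ _ _)⟩
        continuous_toFun := by fun_prop
        map_zero_left := fun t => rfl
        map_one_left := fun t => rfl
        prop' := ?_ }
    rintro s t (rfl | rfl)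
    · exact Subtype.ext (h0 s s.2)
    · exact Subtype.ext (h1 s s.2)
  obtain ⟨H⟩ := hpq
  have cH : Continuous fun x : ℝ × ℝ =>
      (H (projIcc 0 1 zero_le_one x.1, projIcc 0 1 zero_le_one x.2) : X) :=
    continuous_subtype_val.comp (H.continuous.comp
      ((continuous_projIcc.comp continuous_fst).prodMk (continuous_projIcc.comp continuous_snd)))
  refine ⟨_, cH, fun x _ => (H _).2, ?_⟩
  rintro ⟨s, t⟩ hx
  obtain ⟨⟨hs, ht⟩, h⟩ := (rad_eq_one _).1 hx
  simp only at hs ht h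
  simp only [projIcc_of_mem _ hs, projIcc_of_mem _ ht]
  rcases h with rfl | rfl | rfl | rfl
  · have := H.apply_zero ⟨t, ht⟩
    exact (congrArg Subtype.val this).symm
  · have := H.apply_one ⟨t, ht⟩
    exact (congrArg Subtype.val this).symm
  · have := H.source ⟨s, hs⟩
    exact (h0 s hs).trans (congrArg Subtype.val this).symm
  · have := H.target ⟨s, hs⟩
    exact (h1 s hs).trans (congrArg Subtype.val this).symm

/-- A family of self-maps of the unit square, preserving its boundary, that starts at the identity
and ends at a map collapsing the sides `t = 0` and `t = 1` to the corners `(0, 0)` and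
`(0, 1)`. -/
noncomputable def shear (w : ℝ) (x : ℝ × ℝ) : ℝ × ℝ :=
  (max 0 (min 1 (x.1 - max 0 (|(1 + 2 * w) * (x.2 - 1 / 2)| - 1 / 2))),
    max 0 (min 1 (1 / 2 + (1 + 2 * w) * (x.2 - 1 / 2))))

lemma clamp_mem (y : ℝ) : max 0 (min 1 y) ∈ I :=
  ⟨le_max_left _ _, max_le zero_le_one (min_le_left _ _)⟩

lemma clamp_of_mem {y : ℝ} (hy : y ∈ I) : max 0 (min 1 y) = y := by
  rw [min_eq_right hy.2, max_eq_right hy.1]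

lemma rad_shear_le (w : ℝ) (x : ℝ × ℝ) : rad (shear w x) ≤ 1 :=
  (rad_le_one _).2 ⟨clamp_mem _, clamp_mem _⟩

lemma rad_shear_eq {w : ℝ} (hw : 0 ≤ w) {x : ℝ × ℝ} (hx : rad x = 1) :
    rad (shear w x) = 1 := by
  refine (rad_eq_one _).2 ⟨⟨clamp_mem _, clamp_mem _⟩, ?_⟩
  obtain ⟨-, h⟩ := (rad_eq_one x).1 hx
  have up : ∀ y : ℝ, 1 ≤ y → max 0 (min 1 y) = 1 := fun y hy => by
    rw [min_eq_left hy, max_eq_right zero_le_one]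
  have down : ∀ y : ℝ, y ≤ 0 → max 0 (min 1 y) = 0 := fun y hy => by
    rw [min_eq_right (hy.trans zero_le_one), max_eq_left hy]
  simp only [shear]
  rcases h with h | h | h | h
  · left
    exact down _ (by rw [h, zero_sub]; simp)
  · set τ := (1 + 2 * w) * (x.2 - 1 / 2)
    rcases le_total |τ| (1 / 2) with h' | h'
    · right; left
      refine up _ ?_
      rw [h, max_eq_left (by linarith)]; simp
    · rcases le_abs.1 h' with h' | h'
      · right; right; right; exact up _ (by linarith)
      · right; right; left; exact down _ (by linarith)
  · right; right; left
    exact down _ (by rw [h]; linarith)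
  · right; right; right
    exact up _ (by rw [h]; linarith)

lemma push_of_nhd {A V : Set X} (hpi2 : ∀ v : V, Subsingleton (HomotopyGroup (Fin 2) V v))
    (hpi1 : ∀ v : ↥(V ∩ A), Function.Injective
      (HomotopyGroup.map (Fin 1) (⟨Set.inclusion Set.inter_subset_left,
        continuous_inclusion Set.inter_subset_left⟩ : C(↥(V ∩ A), ↥V)) v))
    (f : ℝ × ℝ → X) (hf : Continuous f) (hfV : ∀ x, rad x ≤ 1 → f x ∈ V)
    (hfA : ∀ x, rad x = 1 → f x ∈ A) : Push A f := by
  have hc : Continuous fun p : ℝ × (ℝ × ℝ) => f (shear p.1 p.2) := by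
    unfold shear; fun_prop
  have hw : Htp (fun _ => A) f (fun x => f (shear 1 x)) := by
    refine ⟨_, hc, ?_, fun _ _ => rfl, fun u hu _ x hx => hfA _ (rad_shear_eq hu hx)⟩
    intro x hx
    obtain ⟨h1, h2⟩ := (rad_le_one x).1 hx
    have h3 : |x.2 - 1 / 2| ≤ 1 / 2 := by
      rw [abs_le]; constructor <;> linarith [h2.1, h2.2]
    have : shear 0 x = x := by
      simp only [shear, mul_zero, add_zero, one_mul]
      rw [max_eq_left (a := (0 : ℝ)) (b := |x.2 - 1 / 2| - 1 / 2) (by linarith), sub_zero,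
        clamp_of_mem h1, add_sub_cancel, clamp_of_mem h2]
    exact congrArg f this
  have c1 : Continuous fun x => f (shear 1 x) := hc.comp (Continuous.prodMk_right (1 : ℝ))
  obtain ⟨f', hf', hf'VA, hff'⟩ := refill hpi1 (fun x => f (shear 1 x)) c1
    (fun x _ => hfV _ (rad_shear_le 1 x)) (fun x hx => hfA _ (rad_shear_eq zero_le_one hx))
    (fun s hs => by
      have : shear 1 (s, 0) = shear 1 (0, 0) := by
        simp only [shear]; norm_num; exact hs.2
      rw [this])
    (fun s hs => by
      have : shear 1 (s, 1) = shear 1 (0, 1) := by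
        simp only [shear]; norm_num; exact hs.2
      rw [this])
  have hr : HR (fun x => f (shear 1 x)) f' :=
    HR.of_sphere (V := V) (fun g g' v hv hg hg' a b c d =>
      sphere_of_pi2 hpi2 g g' v hv hg hg' a b c d) c1 hf'
      (fun x _ => hfV _ (rad_shear_le 1 x)) (fun x hx => (hf'VA x hx).1) hff'
  refine Push.of_weak (hw.trans (hr.mono fun x hx => ?_)) fun x hx => (hf'VA x hx).2
  rintro _ rfl
  exact hfA _ (rad_shear_eq zero_le_one hx)

end VLemma

/-! ### Pushing paths off the subcomplex -/

section PathPush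

variable {X : Type*} [MetricSpace X]

/-- The local properties of the pair `(X, A)` used below. `loc`: every point has arbitrarily small
neighbourhoods `O ⊆ U` such that `O ∩ A` is path connected (or empty) and paths in `U` with the
same endpoints are homotopic in `U`. `reach`: points can be moved into `A` along small paths.
`sq`: small squares with boundary in `A` can be pushed into `A`. -/
structure Tame (A : Set X) : Prop where
  loc : ∀ x : X, ∀ ε > 0, ∃ O U : Set X, IsOpen O ∧ x ∈ O ∧ O ⊆ U ∧ U ⊆ Metric.ball x ε ∧
    (∀ a ∈ O ∩ A, ∀ b ∈ O ∩ A, JoinedIn (O ∩ A) a b) ∧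
    ∀ (a b : X) (p q : Path a b), (∀ t, p t ∈ U) → (∀ t, q t ∈ U) →
      ∃ H : p.Homotopy q, ∀ z, H z ∈ U
  reach : ∀ (x : X) (N : Set X), IsOpen N → x ∈ N → ∃ a ∈ A, ∃ h : Path x a, ∀ t, h t ∈ N
  sq : ∀ x : X, ∃ V : Set X, IsOpen V ∧ x ∈ V ∧ ∀ f : ℝ × ℝ → X, Continuous f →
    (∀ z, rad z ≤ 1 → f z ∈ V) → (∀ z, rad z = 1 → f z ∈ A) → Push A f

/-- The path `p` is pushed into `A` by a homotopy in `U` whose endpoints move along the prescribed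
tracks `α` and `β` (during the second half of the time). -/
lemma fill {A O U : Set X} (hOU : O ⊆ U)
    (hO : ∀ a ∈ O ∩ A, ∀ b ∈ O ∩ A, JoinedIn (O ∩ A) a b)
    (hU : ∀ (a b : X) (p q : Path a b), (∀ t, p t ∈ U) → (∀ t, q t ∈ U) →
      ∃ H : p.Homotopy q, ∀ z, H z ∈ U)
    {p α β : ℝ → X} (hp : Continuous p) (hα : Continuous α) (hβ : Continuous β)
    (hpO : ∀ t ∈ I, p t ∈ O) (hαO : ∀ t, α t ∈ O) (hβO : ∀ t, β t ∈ O)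
    (hα0 : ∀ s ≤ 0, α s = p 0) (hβ0 : ∀ s ≤ 0, β s = p 1)
    (hα1 : ∀ s, 1 ≤ s → α s = α 1) (hβ1 : ∀ s, 1 ≤ s → β s = β 1)
    (hαA : α 1 ∈ A) (hβA : β 1 ∈ A) :
    ∃ H : ℝ × ℝ → X, Continuous H ∧ (∀ z, H z ∈ U) ∧ (∀ t ∈ I, H (0, t) = p t) ∧
      (∀ t ∈ I, H (1, t) ∈ A) ∧ (∀ s, H (s, 0) = α (2 * s - 1)) ∧
      ∀ s, H (s, 1) = β (2 * s - 1) := by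
  obtain ⟨q, hq⟩ := hO (α 1) ⟨hαO _, hαA⟩ (β 1) ⟨hβO _, hβA⟩
  have hqe : ∀ t, q.extend t ∈ O ∩ A := fun t => hq _
  -- `T s` runs along `α` from time `s` to `1`, then along `q`, then back along `β` to time `s`
  let T : ℝ × ℝ → X := fun z =>
    if z.2 ≤ 1 / 3 then α (max z.1 (3 * z.2)) else
      if z.2 ≤ 2 / 3 then q.extend (3 * z.2 - 1) else β (max z.1 (3 * (1 - z.2)))
  have hT : Continuous T := by
    refine Continuous.if_le (by fun_prop) ?_ (by fun_prop) (by fun_prop) ?_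
    · refine Continuous.if_le (by fun_prop) (by fun_prop) (by fun_prop) (by fun_prop) ?_
      intro z hz
      rw [hz, hβ1 _ (le_max_of_le_right (by norm_num)), q.extend_of_one_le (by norm_num)]
    · intro z hz
      rw [hz, if_pos (by norm_num), hα1 _ (le_max_of_le_right (by norm_num)),
        q.extend_of_le_zero (by norm_num)]
  have hTO : ∀ z, T z ∈ O := by
    intro z
    simp only [T]
    split_ifs
    exacts [hαO _, (hqe _).1, hβO _]
  let P : Path (p 0) (p 1) := ⟨⟨fun t => p t, by fun_prop⟩, by simp, by simp⟩
  let Q : Path (p 0) (p 1) := ⟨⟨fun t => T (0, t), by fun_prop⟩,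
    by simp only [T]; norm_num; exact hα0 0 le_rfl,
    by simp only [T]; norm_num; exact hβ0 0 le_rfl⟩
  obtain ⟨h, hh⟩ := hU _ _ P Q (fun t => hOU (hpO t t.2)) (fun t => hOU (hTO _))
  let pr : ℝ → I := projIcc 0 1 zero_le_one
  have hpr : Continuous pr := continuous_projIcc
  have hprI : ∀ t (ht : t ∈ I), pr t = ⟨t, ht⟩ := fun t ht => projIcc_of_mem _ ht
  refine ⟨fun z => if z.1 ≤ 1 / 2 then h (pr (2 * z.1), pr z.2) else
    T (2 * z.1 - 1, (pr z.2 : ℝ)), ?_, ?_, ?_, ?_, ?_, ?_⟩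
  · refine Continuous.if_le ?_ ?_ (by fun_prop) (by fun_prop) ?_
    · exact h.continuous.comp ((hpr.comp (by fun_prop)).prodMk (hpr.comp (by fun_prop)))
    · exact hT.comp ((by fun_prop : Continuous fun z : ℝ × ℝ => 2 * z.1 - 1).prodMk
        (continuous_subtype_val.comp (hpr.comp (by fun_prop))))
    · intro z hz
      have e : pr (2 * z.1) = 1 := by rw [hz]; norm_num; exact projIcc_right _
      rw [e, hz]
      refine (h.apply_one _).trans ?_
      change T (0, _) = _
      norm_num
  · intro z
    dsimp only
    split_ifs
    exacts [hh _, hOU (hTO _)]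
  · intro t ht
    have e : pr (2 * 0) = 0 := by rw [mul_zero]; exact projIcc_left _
    simp only [one_div, inv_nonneg, Nat.ofNat_nonneg, if_true, e, hprI t ht]
    exact h.apply_zero _
  · intro t ht
    have e : ¬ (1 : ℝ) ≤ 1 / 2 := by norm_num
    simp only [e, if_false, hprI t ht, T]
    split_ifs with h1 h2
    · rw [hα1]; exact hαA; exact le_max_of_le_left (by norm_num)
    · exact (hqe _).2
    · rw [hβ1]; exact hβA; exact le_max_of_le_left (by norm_num)
  · intro s
    have e : pr 0 = 0 := projIcc_left _
    simp only [e]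
    split_ifs with hs
    · refine (h.source _).trans (hα0 _ (by linarith)).symm
    · simp only [T, Icc.coe_zero]
      rw [if_pos (by norm_num), max_eq_left (by linarith)]
  · intro s
    have e : pr 1 = 1 := projIcc_right _
    simp only [e]
    split_ifs with hs
    · refine (h.target _).trans (hβ0 _ (by linarith)).symm
    · simp only [T, Icc.coe_one]
      rw [if_neg (by norm_num), if_neg (by norm_num), max_eq_left (by linarith)]

/-- A path with endpoints in `A` can be pushed into `A`, relative to its endpoints, by an
arbitrarily small homotopy. -/
lemma Tame.push_path {A : Set X} (hA : Tame A) {γ : ℝ → X} (hγ : Continuous γ)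
    (h0 : γ 0 ∈ A) (h1 : γ 1 ∈ A) {ε : ℝ} (hε : 0 < ε) :
    ∃ h : ℝ × ℝ → X, Continuous h ∧ (∀ t ∈ I, h (0, t) = γ t) ∧ (∀ t ∈ I, h (1, t) ∈ A) ∧
      (∀ s, ∀ t ∈ I, dist (h (s, t)) (γ t) < ε) ∧ (∀ s, h (s, 0) = γ 0) ∧
      ∀ s, h (s, 1) = γ 1 := by
  choose O' U' hO' hxO' hOU' hUb' hjoin' hhom' using fun x => hA.loc x (ε / 2) (half_pos hε)
  obtain ⟨δ, hδ, hδc⟩ := lebesgue_number_lemma_of_metric (s := I) (c := fun x => γ ⁻¹' O' x)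
    isCompact_Icc (fun x => (hO' x).preimage hγ)
    (fun t _ => mem_iUnion.2 ⟨γ t, hxO' (γ t)⟩)
  obtain ⟨M, hM⟩ := exists_nat_one_div_lt hδ
  obtain ⟨N, hN⟩ : ∃ N, N = M + 1 := ⟨_, rfl⟩
  have hN0 : (0 : ℝ) < N := by rw [hN]; positivity
  have hNδ : 1 / (N : ℝ) < δ := by rw [hN]; exact_mod_cast hM
  -- rescaling puts the division points at the integers
  let g : ℝ → X := fun t => γ (t / N)
  have hg : Continuous g := by fun_prop
  have hg0 : g 0 = γ 0 := by simp [g]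
  have hgN : g N = γ 1 := by simp [g, hN0.ne']
  have hcov : ∀ j : ℕ, ∃ x, j < N → ∀ t ∈ Icc (j : ℝ) (j + 1), g t ∈ O' x := by
    intro j
    by_cases hj : j < N
    · have hj' : (j : ℝ) ≤ N := by exact_mod_cast hj.le
      obtain ⟨x, hx⟩ := hδc (j / N) ⟨by positivity, by rw [div_le_one hN0]; exact hj'⟩
      refine ⟨x, fun _ t ht => hx ?_⟩
      rw [Metric.mem_ball, Real.dist_eq, ← sub_div, abs_of_nonneg (div_nonneg (by linarith [ht.1]) hN0.le)]
      refine lt_of_le_of_lt ?_ hNδ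
      gcongr
      linarith [ht.2]
    · exact ⟨γ 0, fun h => absurd h hj⟩
  choose c hc using hcov
  let O : ℕ → Set X := fun j => O' (c j)
  -- tracks of the division points
  have htrack : ∀ n : ℕ, ∃ α : ℝ → X, n ≤ N → Continuous α ∧ (∀ s ≤ 0, α s = g n) ∧
      (∀ s, 1 ≤ s → α s = α 1) ∧ α 1 ∈ A ∧
      (∀ j, j < N → (j = n ∨ j + 1 = n) → ∀ s, α s ∈ O j) ∧
      (n = 0 ∨ n = N → ∀ s, α s = g n) := by
    intro n
    have hnO : ∀ j, j < N → (j = n ∨ j + 1 = n) → g n ∈ O j := by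
      rintro j hj (rfl | rfl)
      · exact hc j hj _ ⟨le_rfl, by linarith⟩
      · exact hc j hj _ ⟨by push_cast; linarith, by push_cast; linarith⟩
    by_cases hn : n = 0 ∨ n = N
    · refine ⟨fun _ => g n, fun _ => ⟨continuous_const, fun _ _ => rfl, fun _ _ => rfl, ?_,
        fun j hj hjn _ => hnO j hj hjn, fun _ _ => rfl⟩⟩
      rcases hn with rfl | rfl
      · simpa [hg0] using h0
      · rw [hgN]; exact h1
    · obtain ⟨a, ha, k, hk⟩ := hA.reach (g n)
        (⋂ j ∈ {j | j < N ∧ (j = n ∨ j + 1 = n)}, O j)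
        (Set.Finite.isOpen_biInter ((Set.finite_lt_nat N).subset fun j hj => hj.1)
          fun j _ => hO' (c j))
        (mem_iInter₂.2 fun j hj => hnO j hj.1 hj.2)
      refine ⟨k.extend, fun _ => ⟨k.continuous_extend, fun s hs => k.extend_of_le_zero hs,
        fun s hs => ?_, ?_, ?_, fun h => absurd h hn⟩⟩
      · rw [k.extend_of_one_le hs, k.extend_one]
      · rw [k.extend_one]; exact ha
      · intro j hj hjn s
        exact mem_iInter₂.1 (hk _) j ⟨hj, hjn⟩
  choose α hα using htrack
  have hfill : ∀ j : ℕ, j < N → ∃ H : ℝ × ℝ → X, Continuous H ∧ (∀ z, H z ∈ U' (c j)) ∧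
      (∀ t ∈ I, H (0, t) = g (j + t)) ∧ (∀ t ∈ I, H (1, t) ∈ A) ∧
      (∀ s, H (s, 0) = α j (2 * s - 1)) ∧ ∀ s, H (s, 1) = α (j + 1) (2 * s - 1) := by
    intro j hj
    obtain ⟨a1, a2, a3, a4, a5, -⟩ := hα j hj.le
    obtain ⟨b1, b2, b3, b4, b5, -⟩ := hα (j + 1) hj
    exact fill (p := fun t => g (j + t)) (hOU' (c j)) (hjoin' (c j)) (hhom' (c j))
      (by fun_prop) a1 b1
      (fun t ht => hc j hj _ ⟨by linarith [ht.1], by linarith [ht.2]⟩)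
      (a5 j hj (Or.inl rfl)) (b5 j hj (Or.inr rfl))
      (fun s hs => by rw [a2 s hs, add_zero])
      (fun s hs => by rw [b2 s hs]; push_cast; rfl) a3 b3 a4 b4
  have claim : ∀ n : ℕ, n ≤ N → ∃ h : ℝ × ℝ → X, Continuous h ∧
      (∀ t ∈ Icc (0 : ℝ) n, h (0, t) = g t) ∧ (∀ t ∈ Icc (0 : ℝ) n, h (1, t) ∈ A) ∧
      (∀ s, ∀ t ∈ Icc (0 : ℝ) n, dist (h (s, t)) (g t) < ε) ∧ (∀ s, h (s, 0) = g 0) ∧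
      ∀ s, h (s, n) = α n (2 * s - 1) := by
    intro n
    induction n with
    | zero =>
      intro _
      have e : ∀ t ∈ Icc (0 : ℝ) (0 : ℕ), t = 0 := fun t ht =>
        le_antisymm (by simpa using ht.2) ht.1
      refine ⟨fun _ => g 0, continuous_const, fun t ht => by rw [e t ht],
        fun t ht => by rw [hg0]; exact h0, fun s t ht => by rw [e t ht, dist_self]; exact hε,
        fun s => rfl, fun s => ?_⟩
      rw [(hα 0 (Nat.zero_le _)).2.2.2.2.2 (Or.inl rfl)]; simp
    | succ n ih =>
      intro hn
      obtain ⟨h, hc1, hh0, hh1, hd, hl, hr⟩ := ih (Nat.le_of_succ_le hn)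
      obtain ⟨H, Hc, HU, H0, H1, Hl, Hr⟩ := hfill n hn
      have hn0 : (0 : ℝ) ≤ n := Nat.cast_nonneg n
      have sp : ∀ t ∈ Icc (0 : ℝ) (n + 1 : ℕ), ¬ t ≤ n → t - n ∈ I := by
        intro t ht htn
        have := ht.2
        push_cast at this
        exact ⟨by linarith, by linarith⟩
      refine ⟨fun z => if z.2 ≤ n then h z else H (z.1, z.2 - n), ?_, ?_, ?_, ?_, ?_, ?_⟩
      · refine Continuous.if_le hc1 (by fun_prop) (by fun_prop) (by fun_prop) ?_
        rintro ⟨s, t⟩ (rfl : t = n)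
        rw [hr, sub_self, Hl]
      · intro t ht
        dsimp only
        split_ifs with htn
        · exact hh0 t ⟨ht.1, htn⟩
        · rw [H0 _ (sp t ht htn), add_sub_cancel]
      · intro t ht
        dsimp only
        split_ifs with htn
        · exact hh1 t ⟨ht.1, htn⟩
        · exact H1 _ (sp t ht htn)
      · intro s t ht
        dsimp only
        split_ifs with htn
        · exact hd s t ⟨ht.1, htn⟩
        · have a1 := hUb' _ (HU (s, t - n))
          have a2 := hUb' _ (HU (0, t - n))
          rw [H0 _ (sp t ht htn), add_sub_cancel] at a2
          rw [Metric.mem_ball] at a1 a2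
          have := dist_triangle_right (H (s, t - n)) (g t) (c n)
          linarith
      · intro s
        simp only [hn0, if_true]
        exact hl s
      · intro s
        have : ¬ (((n + 1 : ℕ) : ℝ) ≤ n) := by push_cast; linarith
        simp only [this, if_false]
        push_cast
        rw [add_sub_cancel_left, Hr]
  obtain ⟨h, hc1, hh0, hh1, hd, hl, hr⟩ := claim N le_rfl
  have sp : ∀ t ∈ I, N * t ∈ Icc (0 : ℝ) N := fun t ht =>
    ⟨mul_nonneg hN0.le ht.1, mul_le_of_le_one_right hN0.le ht.2⟩
  have ge : ∀ t, g (N * t) = γ t := fun t => by simp only [g]; rw [mul_div_cancel_left₀ _ hN0.ne']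
  refine ⟨fun z => h (z.1, N * z.2), by fun_prop, fun t ht => ?_, fun t ht => hh1 _ (sp t ht),
    fun s t ht => ?_, fun s => ?_, fun s => ?_⟩
  · rw [← ge t]; exact hh0 _ (sp t ht)
  · rw [← ge t]; exact hd s _ (sp t ht)
  · simp only [mul_zero]; rw [hl, hg0]
  · simp only [mul_one]; rw [hr, (hα N le_rfl).2.2.2.2.2 (Or.inr rfl), hgN]

end PathPush

/-! ### The space of paths with endpoints in `A`, and pushing squares into `A` -/

section PathSpace

variable {X : Type*} [MetricSpace X]

/-- The space of paths in `X` with both endpoints in `A`, with the uniform metric. -/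
abbrev PathSp (A : Set X) : Type _ := {γ : C(I, X) // γ 0 ∈ A ∧ γ 1 ∈ A}

/-- The paths that run inside `A`. -/
def Inner (A : Set X) : Set (PathSp A) := {γ | ∀ t, γ.1 t ∈ A}

/-- The retraction of the real line onto the unit interval. -/
noncomputable abbrev pr : ℝ → I := projIcc 0 1 zero_le_one

lemma continuous_pr : Continuous pr := continuous_projIcc

lemma pr_of_mem {t : ℝ} (ht : t ∈ I) : pr t = ⟨t, ht⟩ := projIcc_of_mem _ ht

lemma pr_coe (t : I) : pr t = t := projIcc_val _ t

lemma pr_zero : pr 0 = 0 := projIcc_left _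

lemma pr_one : pr 1 = 1 := projIcc_right _

variable {A : Set X}

/-- The square swept out by a path of paths. -/
noncomputable def sweep {z w : PathSp A} (G : Path z w) (x : ℝ × ℝ) : X :=
  (G (pr x.1)).1 (pr x.2)

lemma continuous_sweep {z w : PathSp A} (G : Path z w) : Continuous (sweep G) := by
  have h1 : Continuous fun x : ℝ × ℝ => (G (pr x.1)).1 :=
    continuous_subtype_val.comp (G.continuous.comp (continuous_pr.comp continuous_fst))
  exact h1.eval (continuous_pr.comp continuous_snd)

lemma sweep_boundary {z w : PathSp A} (G : Path z w) (hz : z ∈ Inner A) (hw : w ∈ Inner A)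
    (x : ℝ × ℝ) (hx : rad x = 1) : sweep G x ∈ A := by
  obtain ⟨-, h | h | h | h⟩ := (rad_eq_one x).1 hx
  · simp only [sweep, h, pr_zero, G.source]; exact hz _
  · simp only [sweep, h, pr_one, G.target]; exact hw _
  · simp only [sweep, h, pr_zero]; exact (G _).2.1
  · simp only [sweep, h, pr_one]; exact (G _).2.2

/-- A family of paths, parametrised by a space `T`, as a continuous map into the path space. -/
lemma exists_family {T : Type*} [TopologicalSpace T] (f : T × I → X) (hf : Continuous f)
    (h0 : ∀ u, f (u, 0) ∈ A) (h1 : ∀ u, f (u, 1) ∈ A) :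
    ∃ F : C(T, PathSp A), ∀ u t, (F u).1 t = f (u, t) :=
  ⟨⟨fun u => ⟨(ContinuousMap.curry ⟨f, hf⟩) u, h0 u, h1 u⟩,
    (ContinuousMap.curry ⟨f, hf⟩).continuous.subtype_mk _⟩, fun _ _ => rfl⟩

lemma Tame.reach_path (hA : Tame A) (z : PathSp A) (N : Set (PathSp A)) (hN : IsOpen N)
    (hz : z ∈ N) : ∃ w ∈ Inner A, ∃ h : Path z w, ∀ t, h t ∈ N := by
  obtain ⟨ε, hε, hεN⟩ := Metric.isOpen_iff.1 hN z hz
  obtain ⟨h, hc, h0, h1, hd, hl, hr⟩ := hA.push_path (γ := fun t => z.1 (pr t))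
    (z.1.continuous.comp continuous_pr) (by rw [pr_zero]; exact z.2.1)
    (by rw [pr_one]; exact z.2.2) hε
  obtain ⟨F, hF⟩ := exists_family (A := A) (T := I) (fun x => h (x.1, x.2)) (by fun_prop)
    (fun u => by dsimp only; rw [Icc.coe_zero, hl, pr_zero]; exact z.2.1)
    (fun u => by dsimp only; rw [Icc.coe_one, hr, pr_one]; exact z.2.2)
  refine ⟨F 1, fun t => ?_, ⟨F, ?_, rfl⟩, fun s => hεN ?_⟩
  · rw [hF]; exact h1 t t.2
  · refine Subtype.ext (ContinuousMap.ext fun t => ?_)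
    change (F 0).1 t = _
    rw [hF]
    exact (h0 t t.2).trans (by rw [pr_coe])
  · rw [Metric.mem_ball, Subtype.dist_eq, ContinuousMap.dist_lt_iff hε]
    intro t
    have := hd s t t.2
    rw [pr_coe] at this
    change dist ((F s).1 t) _ < ε
    rwa [hF]

lemma Good.push {z w : PathSp A} {G : Path z w} (hz : z ∈ Inner A) (hw : w ∈ Inner A)
    (h : Good (Inner A) G) : Push A (sweep G) := by
  obtain ⟨G', hG', ⟨H⟩⟩ := h
  refine Push.of_weak (g := sweep G') ?_ fun x _ => hG' _ _
  refine ⟨fun p => (H (pr p.1, pr p.2.1)).1 (pr p.2.2), ?_, ?_, ?_, ?_⟩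
  · have h1 : Continuous fun p : ℝ × (ℝ × ℝ) => (H (pr p.1, pr p.2.1)).1 :=
      continuous_subtype_val.comp (H.continuous.comp ((continuous_pr.comp continuous_fst).prodMk
        (continuous_pr.comp (continuous_fst.comp continuous_snd))))
    exact h1.eval (continuous_pr.comp (continuous_snd.comp continuous_snd))
  · intro x _
    dsimp only
    rw [pr_zero, H.apply_zero]; rfl
  · intro x _
    dsimp only
    rw [pr_one, H.apply_one]; rfl
  · intro u _ _ x hx
    obtain ⟨-, h | h | h | h⟩ := (rad_eq_one x).1 hx
    · simp only [h, pr_zero, H.source]; exact hz _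
    · simp only [h, pr_one, H.target]; exact hw _
    · simp only [h, pr_zero]; exact (H _).2.1
    · simp only [h, pr_one]; exact (H _).2.2

lemma Push.good {z w : PathSp A} {G : Path z w} (hz : z ∈ Inner A) (hw : w ∈ Inner A)
    (h : Push A (sweep G)) : Good (Inner A) G := by
  obtain ⟨g, hg, hgA, H, hc, h0, h1, hb⟩ := h
  have hbd : ∀ (u : I) x, rad x = 1 → H (u, x) = sweep G x := fun u x hx => hb u u.2.1 u.2.2 x hx
  have hQ : ∀ s t : I, rad ((s : ℝ), (t : ℝ)) ≤ 1 := fun s t => (rad_le_one _).2 ⟨s.2, t.2⟩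
  have e1 : ∀ (s : I) (t : ℝ), t = 0 ∨ t = 1 → rad ((s : ℝ), t) = 1 := fun s t h =>
    (rad_eq_one _).2 ⟨⟨s.2, by rcases h with rfl | rfl <;> simp⟩, Or.inr (Or.inr h)⟩
  have e2 : ∀ (s : ℝ) (t : I), s = 0 ∨ s = 1 → rad (s, (t : ℝ)) = 1 := fun s t h =>
    (rad_eq_one _).2 ⟨⟨by rcases h with rfl | rfl <;> simp, t.2⟩, by tauto⟩
  obtain ⟨F, hF⟩ := exists_family (A := A) (T := I × I)
    (fun x => H (x.1.1, ((x.1.2 : ℝ), (x.2 : ℝ)))) (by fun_prop)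
    (fun u => by
      have e := e1 u.2 0 (Or.inl rfl)
      dsimp only
      rw [Icc.coe_zero, hbd _ _ e]
      exact sweep_boundary G hz hw _ e)
    (fun u => by
      have e := e1 u.2 1 (Or.inr rfl)
      dsimp only
      rw [Icc.coe_one, hbd _ _ e]
      exact sweep_boundary G hz hw _ e)
  have hF0 : ∀ u, F (u, 0) = z := fun u => Subtype.ext (ContinuousMap.ext fun t => by
    rw [hF]
    exact (hbd u _ (e2 0 t (Or.inl rfl))).trans (by simp [sweep]))
  have hF1 : ∀ u, F (u, 1) = w := fun u => Subtype.ext (ContinuousMap.ext fun t => by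
    rw [hF]
    exact (hbd u _ (e2 1 t (Or.inr rfl))).trans (by simp [sweep]))
  refine ⟨⟨⟨fun s => F (1, s), by fun_prop⟩, hF0 1, hF1 1⟩, fun s t => ?_, ⟨?_⟩⟩
  · change (F (1, s)).1 t ∈ A
    rw [hF]
    dsimp only
    rw [Icc.coe_one, h1 _ (hQ s t)]
    exact hgA _ (hQ s t)
  · refine ⟨⟨F, fun s => ?_, fun s => rfl⟩, ?_⟩
    · refine Subtype.ext (ContinuousMap.ext fun t => ?_)
      refine (hF _ _).trans ?_
      dsimp only
      rw [Icc.coe_zero, h0 _ (hQ s t)]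
      simp [sweep]
    · rintro u s (rfl | rfl)
      · exact (hF0 u).trans G.source.symm
      · exact (hF1 u).trans G.target.symm

/-- A square with boundary in `A`, read as a path of paths. -/
lemma exists_sweep (f : ℝ × ℝ → X) (hf : Continuous f) (hfA : ∀ x, rad x = 1 → f x ∈ A) :
    ∃ z ∈ Inner A, ∃ w ∈ Inner A, ∃ G : Path z w, ∀ x, rad x ≤ 1 → sweep G x = f x := by
  have e1 : ∀ (s : I) (t : ℝ), t = 0 ∨ t = 1 → rad ((s : ℝ), t) = 1 := fun s t h =>
    (rad_eq_one _).2 ⟨⟨s.2, by rcases h with rfl | rfl <;> simp⟩, Or.inr (Or.inr h)⟩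
  have e2 : ∀ (s : ℝ) (t : I), s = 0 ∨ s = 1 → rad (s, (t : ℝ)) = 1 := fun s t h =>
    (rad_eq_one _).2 ⟨⟨by rcases h with rfl | rfl <;> simp, t.2⟩, by tauto⟩
  obtain ⟨F, hF⟩ := exists_family (A := A) (T := I) (fun x => f (x.1, x.2)) (by fun_prop)
    (fun u => hfA _ (e1 u _ (Or.inl rfl))) (fun u => hfA _ (e1 u _ (Or.inr rfl)))
  refine ⟨F 0, fun t => ?_, F 1, fun t => ?_, ⟨F, rfl, rfl⟩, fun x hx => ?_⟩
  · rw [hF]; exact hfA _ (e2 _ t (Or.inl rfl))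
  · rw [hF]; exact hfA _ (e2 _ t (Or.inr rfl))
  · obtain ⟨h1, h2⟩ := (rad_le_one x).1 hx
    refine (hF _ _).trans ?_
    dsimp only
    rw [pr_of_mem h1, pr_of_mem h2]

lemma rad_swap (x : ℝ × ℝ) : rad x.swap = rad x := by
  rw [rad_eq, rad_eq, max_comm]; rfl

lemma Push.swap {f : ℝ × ℝ → X} (h : Push A fun x => f x.swap) : Push A f := by
  obtain ⟨g, hg, hgA, H, hc, h0, h1, hb⟩ := h
  refine ⟨fun x => g x.swap, by fun_prop, fun x hx => hgA _ (by rwa [rad_swap]),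
    fun p => H (p.1, p.2.swap), by fun_prop, fun x hx => ?_, fun x hx => ?_, fun u h1 h2 x hx => ?_⟩
  · exact (h0 _ (by rwa [rad_swap])).trans (by simp)
  · exact h1 _ (by rwa [rad_swap])
  · have := hb u h1 h2 x.swap (by rwa [rad_swap])
    simpa using this

/-- A square all of whose lines `t = const` lie in good neighbourhoods can be pushed into `A`. -/
lemma Tame.push_strip (hA : Tame A) (f : ℝ × ℝ → X) (hf : Continuous f)
    (hfA : ∀ x, rad x = 1 → f x ∈ A)
    (hV : ∀ t ∈ I, ∃ V : Set X, IsOpen V ∧ (∀ s ∈ I, f (s, t) ∈ V) ∧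
      ∀ f : ℝ × ℝ → X, Continuous f → (∀ z, rad z ≤ 1 → f z ∈ V) →
        (∀ z, rad z = 1 → f z ∈ A) → Push A f) : Push A f := by
  obtain ⟨z, hz, w, hw, G, hG⟩ := exists_sweep (A := A) (fun x => f x.swap) (by fun_prop)
    (fun x hx => hfA _ (by rwa [rad_swap]))
  refine Push.swap (Push.congr hG (Good.push hz hw ?_))
  refine good_of_local _ hA.reach_path hz hw G fun t => ?_
  obtain ⟨V, hVo, hVt, hVp⟩ := hV t t.2
  refine ⟨{γ | ∀ s, γ.1 s ∈ V}, ?_, fun s => ?_, fun z' w' G' hz' hw' hG' => ?_⟩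
  · have : IsOpen {γ : C(I, X) | MapsTo γ univ V} :=
      ContinuousMap.isOpen_setOfPred_mapsTo isCompact_univ hVo
    convert this.preimage continuous_subtype_val using 1
    ext γ
    simp [MapsTo]
  · have := hG (t, s) ((rad_le_one _).2 ⟨t.2, s.2⟩)
    simp only [sweep, pr_coe] at this
    rw [this]
    exact hVt s s.2
  · refine Push.good hz' hw' (hVp _ (continuous_sweep _) (fun x _ => hG' _ _)
      (sweep_boundary _ hz' hw'))

/-- Every square with boundary in `A` can be pushed into `A`. -/
theorem Tame.push (hA : Tame A) (f : ℝ × ℝ → X) (hf : Continuous f)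
    (hfA : ∀ x, rad x = 1 → f x ∈ A) : Push A f := by
  obtain ⟨z, hz, w, hw, G, hG⟩ := exists_sweep (A := A) f hf hfA
  refine Push.congr hG (Good.push hz hw ?_)
  refine good_of_local _ hA.reach_path hz hw G fun t => ?_
  choose V hVo hVx hVp using hA.sq
  obtain ⟨δ, hδ, hδc⟩ := lebesgue_number_lemma_of_metric (s := range (G t).1) (c := V)
    (isCompact_range (G t).1.continuous) hVo (fun x _ => mem_iUnion.2 ⟨x, hVx x⟩)
  refine ⟨Metric.ball (G t) δ, Metric.isOpen_ball, Metric.mem_ball_self hδ,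
    fun z' w' G' hz' hw' hG' => ?_⟩
  refine Push.good hz' hw' (hA.push_strip _ (continuous_sweep _) (sweep_boundary _ hz' hw') ?_)
  intro u hu
  obtain ⟨x, hx⟩ := hδc ((G t).1 ⟨u, hu⟩) (mem_range_self _)
  refine ⟨V x, hVo x, fun s hs => hx ?_, hVp x⟩
  have := hG' ⟨s, hs⟩
  rw [Metric.mem_ball, Subtype.dist_eq] at this
  rw [Metric.mem_ball]
  simp only [sweep, pr_of_mem hs, pr_of_mem hu]
  exact lt_of_le_of_lt (ContinuousMap.dist_apply_le_dist _) this

end PathSpace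

/-! ### Consequences for homotopy groups -/

section Consequences

variable {X : Type*} [MetricSpace X] {A : Set X}

lemma Tame.pi0 (hA : Tame A) : Function.Bijective
    (ZerothHomotopy.map (⟨Subtype.val, continuous_subtype_val⟩ : C(↥A, X))) := by
  constructor
  · intro x y
    refine Quotient.inductionOn₂ x y fun a b hab => Quotient.sound ?_
    obtain ⟨p⟩ : Joined (a : X) b := Quotient.exact hab
    obtain ⟨h, hc, h0, h1, -, hl, hr⟩ := hA.push_path p.continuous_extend
      (by rw [p.extend_zero]; exact a.2) (by rw [p.extend_one]; exact b.2) one_pos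
    refine ⟨⟨⟨fun t => ⟨h (1, t), h1 t t.2⟩, by fun_prop⟩, Subtype.ext ?_, Subtype.ext ?_⟩⟩
    · simp [hl]
    · simp [hr]
  · intro y
    refine Quotient.inductionOn y fun x => ?_
    obtain ⟨a, ha, p, -⟩ := hA.reach x univ isOpen_univ (mem_univ _)
    exact ⟨⟦⟨a, ha⟩⟧, Quotient.sound ⟨p.symm⟩⟩

lemma Tame.pi1 (hA : Tame A) (a : A) : Function.Bijective
    (HomotopyGroup.map (Fin 1) (⟨Subtype.val, continuous_subtype_val⟩ : C(↥A, X)) a) := by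
  constructor
  · refine (pi1_injective_iff _ _).2 fun γ δ ⟨H⟩ => ?_
    have e : ∀ x : ℝ × ℝ, rad x = 1 → H (pr x.1, pr x.2) ∈ A := by
      intro x hx
      obtain ⟨-, h | h | h | h⟩ := (rad_eq_one x).1 hx
      · rw [h, pr_zero]; erw [H.apply_zero]; exact (γ _).2
      · rw [h, pr_one]; erw [H.apply_one]; exact (δ _).2
      · rw [h, pr_zero]; erw [H.source]; exact a.2
      · rw [h, pr_one]; erw [H.target]; exact a.2
    obtain ⟨g, hg, hgA, hfg⟩ := hA.push (fun x => H (pr x.1, pr x.2)) (H.continuous.comp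
      ((continuous_pr.comp continuous_fst).prodMk (continuous_pr.comp continuous_snd))) e
    have hb : ∀ s t : I, s = 0 ∨ s = 1 ∨ t = 0 ∨ t = 1 → g ((s : ℝ), (t : ℝ)) = H (s, t) := by
      intro s t h
      refine (hfg.eqS ((rad_eq_one _).2 ⟨⟨s.2, t.2⟩, ?_⟩)).trans ?_
      · rcases h with rfl | rfl | rfl | rfl <;> simp
      · rw [pr_coe, pr_coe]
    refine ⟨⟨⟨⟨fun x => ⟨g ((x.1 : ℝ), (x.2 : ℝ)), hgA _ ((rad_le_one _).2 ⟨x.1.2, x.2.2⟩)⟩,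
      by fun_prop⟩, fun t => Subtype.ext ?_, fun t => Subtype.ext ?_⟩, ?_⟩⟩
    · exact (hb 0 t (by simp)).trans (H.apply_zero t)
    · exact (hb 1 t (by simp)).trans (H.apply_one t)
    · rintro s t (rfl | rfl)
      · refine Subtype.ext (((hb s 0 (by simp)).trans (H.source s)).trans ?_)
        exact congrArg Subtype.val γ.source.symm
      · refine Subtype.ext (((hb s 1 (by simp)).trans (H.target s)).trans ?_)
        exact congrArg Subtype.val γ.target.symm
  · refine pi1_surjective _ _ fun γ => ?_
    obtain ⟨h, hc, h0, h1, -, hl, hr⟩ := hA.push_path γ.continuous_extend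
      (by rw [γ.extend_zero]; exact a.2) (by rw [γ.extend_one]; exact a.2) one_pos
    simp only [γ.extend_zero, γ.extend_one] at hl hr
    let δ : Path a a := ⟨⟨fun t => ⟨h (1, t), h1 t t.2⟩, by fun_prop⟩,
      Subtype.ext (by simp [hl]), Subtype.ext (by simp [hr])⟩
    refine ⟨δ, Path.Homotopic.symm ⟨⟨⟨⟨fun x => h ((x.1 : ℝ), (x.2 : ℝ)), by fun_prop⟩,
      fun t => ?_, fun t => ?_⟩, ?_⟩⟩⟩
    · simp [h0 t t.2]
    · simp [δ]
    · rintro s t (rfl | rfl)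
      · simp [hl]
      · simp [hr]

lemma Tame.pi2 (hA : Tame A) (a : A) : Function.Surjective
    (HomotopyGroup.map (Fin 2) (⟨Subtype.val, continuous_subtype_val⟩ : C(↥A, X)) a) := by
  intro b
  refine Quotient.inductionOn b fun γ => ?_
  have hp : Continuous fun x : ℝ × ℝ => (![pr x.1, pr x.2] : Fin 2 → I) := by
    refine continuous_pi fun i => ?_
    fin_cases i
    · exact continuous_pr.comp continuous_fst
    · exact continuous_pr.comp continuous_snd
  have hb : ∀ x : ℝ × ℝ, rad x = 1 → γ ![pr x.1, pr x.2] = (a : X) := by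
    intro x hx
    refine γ.2 _ ?_
    obtain ⟨_, h | h | h | h⟩ := (rad_eq_one x).1 hx
    · exact ⟨0, Or.inl (by simp [h])⟩
    · exact ⟨0, Or.inr (by simp [h])⟩
    · exact ⟨1, Or.inl (by simp [h])⟩
    · exact ⟨1, Or.inr (by simp [h])⟩
  have hpy : ∀ y : Fin 2 → I, ![pr (y 0), pr (y 1)] = y := by
    intro y
    funext i
    fin_cases i
    · exact pr_coe (y 0)
    · exact pr_coe (y 1)
  obtain ⟨g, hg, hgA, H, hH, H0, H1, HS⟩ := hA.push (fun x => γ ![pr x.1, pr x.2])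
    (γ.1.continuous.comp hp) (fun x hx => by rw [hb x hx]; exact a.2)
  have hQ : ∀ y : Fin 2 → I, rad ((y 0 : ℝ), (y 1 : ℝ)) ≤ 1 := fun y =>
    (rad_le_one _).2 ⟨(y 0).2, (y 1).2⟩
  have hS : ∀ y : Fin 2 → I, y ∈ Cube.boundary (Fin 2) → rad ((y 0 : ℝ), (y 1 : ℝ)) = 1 := by
    rintro y ⟨i, hi⟩
    refine (rad_eq_one _).2 ⟨⟨(y 0).2, (y 1).2⟩, ?_⟩
    fin_cases i <;> rcases hi with hi | hi <;> simp_all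
  have HS' : ∀ u : I, ∀ y : Fin 2 → I, y ∈ Cube.boundary (Fin 2) →
      H (u, ((y 0 : ℝ), (y 1 : ℝ))) = γ y := by
    intro u y hy
    refine (HS u u.2.1 u.2.2 _ (hS y hy)).trans ?_
    dsimp only
    rw [hpy]
  let δ : GenLoop (Fin 2) A a := ⟨⟨fun y => ⟨g ((y 0 : ℝ), (y 1 : ℝ)), hgA _ (hQ y)⟩,
    by fun_prop⟩, fun y hy => Subtype.ext (by
      have := HS' 1 y hy
      rw [Icc.coe_one, H1 _ (hQ y)] at this
      exact this.trans (γ.2 y hy))⟩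
  refine ⟨⟦δ⟧, Quotient.sound (GenLoop.Homotopic.symm ⟨⟨⟨⟨fun p =>
    H ((p.1 : ℝ), ((p.2 0 : ℝ), (p.2 1 : ℝ))), by fun_prop⟩, fun y => ?_, fun y => ?_⟩, ?_⟩⟩)⟩
  · refine (H0 _ (hQ y)).trans ?_
    dsimp only
    rw [hpy]; rfl
  · exact H1 _ (hQ y)
  · intro u y hy
    exact HS' u y hy

end Consequences

/-! ### Local structure of finite simplicial complexes -/

section Complex

variable {E : Type*} [NormedAddCommGroup E] [NormedSpace ℝ E]

lemma isCompact_space {K : Geometry.SimplicialComplex ℝ E} (hK : K.faces.Finite) :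
    IsCompact K.space :=
  hK.isCompact_biUnion fun s _ => s.finite_toSet.isCompact_convexHull ℝ

/-- Small balls in a finite complex are star-shaped about their centre. -/
lemma exists_segment {K : Geometry.SimplicialComplex ℝ E} (hK : K.faces.Finite) (x : E) :
    ∃ r > 0, ∀ z ∈ K.space, dist z x < r → segment ℝ x z ⊆ K.space := by
  have hc : IsClosed (⋃ s ∈ {s ∈ K.faces | x ∉ convexHull ℝ (s : Set E)},
      convexHull ℝ (s : Set E)) :=
    ((hK.subset fun s hs => hs.1).isCompact_biUnion fun s _ =>
      s.finite_toSet.isCompact_convexHull ℝ).isClosed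
  obtain ⟨r, hr, hrs⟩ := Metric.isOpen_iff.1 hc.isOpen_compl x (by simp)
  refine ⟨r, hr, fun z hz hzr => ?_⟩
  obtain ⟨s, hs, hzs⟩ := Geometry.SimplicialComplex.mem_space_iff.1 hz
  have hxs : x ∈ convexHull ℝ (s : Set E) := by
    by_contra h
    exact hrs hzr (mem_iUnion₂.2 ⟨s, ⟨hs, h⟩, hzs⟩)
  exact ((convex_convexHull ℝ _).segment_subset hxs hzs).trans
    (Geometry.SimplicialComplex.convexHull_subset_space hs)

lemma exists_starConvex {K : Geometry.SimplicialComplex ℝ E} (hK : K.faces.Finite)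
    (x : K.space) : ∃ r > 0, ∀ ε > 0, ε ≤ r →
      StarConvex ℝ (x : E) (K.space ∩ Metric.ball (x : E) ε) := by
  obtain ⟨r, hr, h⟩ := exists_segment hK (x : E)
  refine ⟨r, hr, fun ε hε hεr => starConvex_iff_segment_subset.2 fun z hz => ?_⟩
  exact subset_inter (h z hz.1 (lt_of_lt_of_le hz.2 hεr))
    ((convex_ball _ _).segment_subset (Metric.mem_ball_self hε) hz.2)

/-- Paths with the same endpoints in a star-shaped subset are homotopic inside it. -/
lemma homotopy_of_starConvex {S : Set E} {x : S} {ε : ℝ} (hε : 0 < ε)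
    (hstar : StarConvex ℝ (x : E) (S ∩ Metric.ball (x : E) ε)) (a b : S) (p q : Path a b)
    (hp : ∀ t, p t ∈ Metric.ball x ε) (hq : ∀ t, q t ∈ Metric.ball x ε) :
    ∃ H : p.Homotopy q, ∀ z, H z ∈ Metric.ball x ε := by
  set T : Set E := S ∩ Metric.ball (x : E) ε
  have : ContractibleSpace T := hstar.contractibleSpace ⟨x, x.2, Metric.mem_ball_self hε⟩
  have ha : (a : E) ∈ T := ⟨a.2, by simpa [Subtype.dist_eq] using hp 0⟩
  have hb : (b : E) ∈ T := ⟨b.2, by simpa [Subtype.dist_eq] using hp 1⟩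
  let P : Path (⟨a, ha⟩ : T) ⟨b, hb⟩ := ⟨⟨fun t => ⟨p t, (p t).2, hp t⟩, by fun_prop⟩,
    by simp, by simp⟩
  let Q : Path (⟨a, ha⟩ : T) ⟨b, hb⟩ := ⟨⟨fun t => ⟨q t, (q t).2, hq t⟩, by fun_prop⟩,
    by simp, by simp⟩
  obtain ⟨H⟩ := SimplyConnectedSpace.paths_homotopic P Q
  have h0 : ∀ t, (H (0, t) : E) = p t := fun t => congrArg Subtype.val (H.apply_zero t)
  have h1 : ∀ t, (H (1, t) : E) = q t := fun t => congrArg Subtype.val (H.apply_one t)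
  refine ⟨⟨⟨⟨fun z => ⟨H z, (H z).2.1⟩, by fun_prop⟩, fun t => Subtype.ext (h0 t),
    fun t => Subtype.ext (h1 t)⟩, ?_⟩, fun z => (H z).2.2⟩
  rintro s t (rfl | rfl)
  · refine Subtype.ext ((congrArg Subtype.val (H.source s)).trans ?_)
    exact congrArg Subtype.val p.source.symm
  · refine Subtype.ext ((congrArg Subtype.val (H.target s)).trans ?_)
    exact congrArg Subtype.val p.target.symm

end Complex

section Main

variable {E : Type*} [NormedAddCommGroup E] [NormedSpace ℝ E]

lemma joinedIn_of_starConvex {S : Set E} {x : S} {ε : ℝ}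
    (hstar : StarConvex ℝ (x : E) (S ∩ Metric.ball (x : E) ε)) (a : S)
    (ha : a ∈ Metric.ball x ε) : JoinedIn (Metric.ball x ε) x a := by
  have hseg : ∀ t : I, AffineMap.lineMap (x : E) (a : E) (t : ℝ) ∈
      S ∩ Metric.ball (x : E) ε := fun t =>
    (starConvex_iff_segment_subset.1 hstar ⟨a.2, ha⟩)
      (by rw [segment_eq_image_lineMap]; exact ⟨t, t.2, rfl⟩)
  refine ⟨⟨⟨fun t => ⟨_, (hseg t).1⟩, ?_⟩, ?_, ?_⟩, fun t => (hseg t).2⟩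
  · refine Continuous.subtype_mk ?_ _
    exact AffineMap.lineMap_continuous.comp continuous_subtype_val
  · exact Subtype.ext (by simp)
  · exact Subtype.ext (by simp)

lemma tame_complement {K L : Geometry.SimplicialComplex ℝ E}
    (hKfin : K.faces.Finite) (hLK : L.faces ⊆ K.faces)
    (A : Set ↥K.space) (hA : A = {p : ↥K.space | (p : E) ∉ L.space})
    (hdense : Dense A)
    (hloc2 : ∀ y : ↥K.space, (y : E) ∈ L.space →
      ∀ U : Set ↥K.space, IsOpen U → y ∈ U →
        ∃ V : Set ↥K.space, IsOpen V ∧ y ∈ V ∧ V ⊆ U ∧ IsPathConnected (V ∩ A))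
    (hloc3 : ∀ y : ↥K.space, (y : E) ∈ L.space →
      ∃ V : Set ↥K.space, IsOpen V ∧ y ∈ V ∧ IsPathConnected V ∧
        (∀ v : ↥V, Subsingleton (HomotopyGroup (Fin 2) ↥V v)) ∧
        ∀ v : ↥(V ∩ A),
          Function.Injective
            (HomotopyGroup.map (Fin 1)
              (⟨Set.inclusion Set.inter_subset_left,
                continuous_inclusion Set.inter_subset_left⟩ : C(↥(V ∩ A), ↥V)) v)) :
    Tame A := by
  have hAo : IsOpen A := by
    rw [hA]
    exact ((isCompact_space (hKfin.subset hLK)).isClosed.preimage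
      continuous_subtype_val).isOpen_compl
  have hnA : ∀ x : K.space, x ∉ A → (x : E) ∈ L.space := fun x hx => by
    rw [hA] at hx; simpa using hx
  refine ⟨fun x ε hε => ?_, fun x N hN hx => ?_, fun x => ?_⟩
  · obtain ⟨r, hr, hstar⟩ := exists_starConvex hKfin x
    by_cases hx : x ∈ A
    · obtain ⟨δ, hδ, hδA⟩ := Metric.isOpen_iff.1 hAo x hx
      have h1 : 0 < min r (min δ ε) := lt_min hr (lt_min hδ hε)
      have hs := hstar _ h1 (min_le_left _ _)
      have hsub : Metric.ball x (min r (min δ ε)) ⊆ A :=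
        (Metric.ball_subset_ball ((min_le_right _ _).trans (min_le_left _ _))).trans hδA
      refine ⟨Metric.ball x (min r (min δ ε)), _, Metric.isOpen_ball, Metric.mem_ball_self h1,
        Subset.rfl, Metric.ball_subset_ball ((min_le_right _ _).trans (min_le_right _ _)), ?_,
        fun a b p q hp hq => homotopy_of_starConvex h1 hs a b p q hp hq⟩
      rw [inter_eq_left.2 hsub]
      intro a ha b hb
      exact (joinedIn_of_starConvex hs a ha).symm.trans (joinedIn_of_starConvex hs b hb)
    · have h1 : 0 < min r ε := lt_min hr hε
      have hs := hstar _ h1 (min_le_left _ _)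
      obtain ⟨V, hV, hxV, hVU, hVpc⟩ := hloc2 x (hnA x hx) (Metric.ball x (min r ε))
        Metric.isOpen_ball (Metric.mem_ball_self h1)
      exact ⟨V, _, hV, hxV, hVU, Metric.ball_subset_ball (min_le_right _ _),
        fun a ha b hb => hVpc.joinedIn a ha b hb,
        fun a b p q hp hq => homotopy_of_starConvex h1 hs a b p q hp hq⟩
  · obtain ⟨r, hr, hstar⟩ := exists_starConvex hKfin x
    obtain ⟨δ, hδ, hδN⟩ := Metric.isOpen_iff.1 hN x hx
    have h1 : 0 < min r δ := lt_min hr hδ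
    obtain ⟨a, haA, ha⟩ := hdense.exists_dist_lt x h1
    obtain ⟨h, hh⟩ := joinedIn_of_starConvex (hstar _ h1 (min_le_left _ _)) a
      (by rw [Metric.mem_ball, dist_comm]; exact ha)
    exact ⟨a, haA, h, fun t => hδN (Metric.ball_subset_ball (min_le_right _ _) (hh t))⟩
  · by_cases hx : x ∈ A
    · exact ⟨A, hAo, hx, fun f hf hfA _ => ⟨f, hf, hfA, HR.of_eq hf fun _ _ => rfl⟩⟩
    · obtain ⟨V, hV, hxV, -, hpi2, hpi1⟩ := hloc3 x (hnA x hx)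
      exact ⟨V, hV, hxV, fun f hf hfV hfA => push_of_nhd hpi2 hpi1 f hf hfV hfA⟩

end Main

end TwoConn

/-- Let `K` be a simplicial complex with finitely many faces in a finite-dimensional real
vector space `E`, with underlying space `X = |K|` (with the subspace topology), and let `L` be
a subcomplex of `K` with underlying space `Y = |L| ⊆ X`.  Let `A = X ∖ Y`.  Assume:

1. `X ∖ Y` is dense in `X`;
2. for every `y ∈ Y` and every open neighborhood `U ⊆ X` of `y` there is an open
   neighborhood `V ⊆ U` of `y` such that `V ∖ Y` is path connected;
3. every `y ∈ Y` has a path connected open neighborhood `V ⊆ X` with `π₂(V) = 0` at every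
   basepoint, such that for every `v ∈ V ∖ Y` the homomorphism `π₁(V ∖ Y, v) → π₁(V, v)`
   induced by inclusion is injective.

Then the inclusion `X ∖ Y ↪ X` is `2`-connected: it induces a bijection on path components,
an isomorphism on fundamental groups at every basepoint of `X ∖ Y`, and a surjection on
second homotopy groups at every basepoint of `X ∖ Y`. -/
theorem simplicialComplex_complement_inclusion_two_connected
    {E : Type*} [NormedAddCommGroup E] [NormedSpace ℝ E] [FiniteDimensional ℝ E]
    (K L : Geometry.SimplicialComplex ℝ E)
    (hKfin : K.faces.Finite) (hLK : L.faces ⊆ K.faces)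
    (A : Set ↥K.space) (hA : A = {p : ↥K.space | (p : E) ∉ L.space})
    (hdense : Dense A)
    (hloc2 : ∀ y : ↥K.space, (y : E) ∈ L.space →
      ∀ U : Set ↥K.space, IsOpen U → y ∈ U →
        ∃ V : Set ↥K.space, IsOpen V ∧ y ∈ V ∧ V ⊆ U ∧ IsPathConnected (V ∩ A))
    (hloc3 : ∀ y : ↥K.space, (y : E) ∈ L.space →
      ∃ V : Set ↥K.space, IsOpen V ∧ y ∈ V ∧ IsPathConnected V ∧
        (∀ v : ↥V, Subsingleton (HomotopyGroup (Fin 2) ↥V v)) ∧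
        ∀ v : ↥(V ∩ A),
          Function.Injective
            (HomotopyGroup.map (Fin 1)
              (⟨Set.inclusion Set.inter_subset_left,
                continuous_inclusion Set.inter_subset_left⟩ : C(↥(V ∩ A), ↥V)) v)) :
    Function.Bijective
      (ZerothHomotopy.map (⟨Subtype.val, continuous_subtype_val⟩ : C(↥A, ↥K.space))) ∧
    (∀ a : ↥A,
      Function.Bijective
        (HomotopyGroup.map (Fin 1)
          (⟨Subtype.val, continuous_subtype_val⟩ : C(↥A, ↥K.space)) a)) ∧
    (∀ a : ↥A,
      Function.Surjective
        (HomotopyGroup.map (Fin 2)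
          (⟨Subtype.val, continuous_subtype_val⟩ : C(↥A, ↥K.space)) a)) := by
  have h := TwoConn.tame_complement hKfin hLK A hA hdense hloc2 hloc3
  exact ⟨h.pi0, h.pi1, h.pi2⟩
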